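/- arXiv:2203.09146 — 2 statements merged into one kernel-verified Lean document; each statement's English description precedes it below -/
import Mathlib

section
/- Let d ≥ 2, let ω ∈ ℝ^{d−1} satisfy the Diophantine condition of type (ν,τ), let L₁ ∈ ℤ^{d−1}, L₂ ∈ ℤ, and let g: ℝ^{d−1} × ℝ → ℝ be C^∞ and ℤ^{d−1} × ℤ-periodic, with y₀ ∈ ℝ such that ∫_{[0,1]^{d−1}} g(σ, y₀) dσ = 0 and ∫_{[0,1]^{d−1}} ∂_y g(σ, y₀) dσ ≠ 0. For ε > 0 define F_ε(x,y) = (x + ω + ε(ω+L₁)g(x,y), y + ε·L₂·g(x,y)) and let (l_j)_{j≥0} be the Lindstedt coefficients with l_0(σ) = (σ, y₀) and l_j ℤ^{d−1}-periodic for j ≥ 1, satisfying for every N: |F_ε(l^{≤N}(σ)) − l^{≤N}(σ+ω)| ≤ C·ε^{N+1} where l^{≤N} = Σ_{j=0}^{N} ε^j l_j. Then for every N ∈ ℕ and every M ∈ ℕ there exist ε₀ > 0 and C' > 0 such that for each ε ∈ (0,ε₀) there exist maps l_*: ℝ^{d−1} → ℝ^{d−1} × ℝ and u_*: ℝ^{d−1}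 → ℝ^{d−1} of class C^M, with l_*(σ) − (σ, 0) and u_*(σ) − σ both ℤ^{d−1}-periodic, such that F_ε ∘ l_* ≡ l_* ∘ u_* modulo ℤ^{d−1} × ℤ, and sup_σ |l^{≤N}(σ) − l_*(σ)| ≤ C'·ε^{N+1} and sup_σ |σ + ω − u_*(σ)| ≤ C'·ε^{N+1}. (The truncated Lindstedt series approximates a true invariant torus of F_ε to the corresponding order.) -/
open scoped BigOperators
open MeasureTheory

/-!
Write `V = (v, L₂)` with `v = ω + L₁`, so that `F_ε(p) = p + (ω, 0) + ε g(p) V`. The map moves points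
only along `V`, apart from the rigid translation. If a linear functional `Λ` kills `V`, comparing
powers of `ε` in the Lindstedt equations gives `Λ (l_j (σ + ω)) = Λ (l_j σ)` for `j ≥ 1`; since `ω`
is nonresonant, Weyl equidistribution forces `Λ ∘ l_j` to be constant (`lindstedt_const`).

**Case `L₂ ≠ 0`** (`torus_of_ne_zero`). In the coordinates `(z, t) ↦ (z + t v, y₀ + t L₂)` of `chart`
the map becomes the skew product `(z, t) ↦ (z + ω, t + ε G(z, t))` over the rotation. By the
preceding remark the truncated series of order `N + 1` is, up to a shift of the parameter, a graph
`t = S(z)`, invariant up to an error of order `ε ^ (N + 2)`. The equation linearized at this graph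
is the twisted cohomological equation `p(z + ω) = (1 + ε α(z)) p(z) + b(z)`, where the mean of `α`
is close to `L₂ ∫ ∂_y g(·, y₀) ≠ 0`, the `x`-derivatives of `g` having mean zero. Up to a coboundary
`α` is close to its mean (`exists_coboundary`), so a change of weight makes the factor uniformly
contracting or uniformly expanding at rate of order `ε`, and the equation is solvable in bounded
functions with constant `K / ε` (`solvable_eps`). A quasi-Newton contraction then yields a true
invariant graph at distance `O(ε ^ (N + 1))` (`invariant_graph`). Its smoothness follows from the
fact that the difference quotients of the graph, and then its derivatives, solve twisted equations
with the same factor. No small divisors have to be estimated, and the inner dynamics is exactly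
`σ ↦ σ + ω`.

**Case `L₂ = 0`** (`torus_of_eq_zero`). The second component is preserved by `F_ε`, and it is
constant along the truncated series. The truncated series therefore parametrises an invariant
torus; its first component is a diffeomorphism close to the identity, and conjugating by it defines
the inner dynamics, which differs from the translation by the error of the Lindstedt equation.
-/

/-! ### Twisted cohomological equations over a translation -/

/-- Uniform solvability of the twisted cohomological equation `p (z + ω) = a z • p z + b z` in
bounded functions, with constant `K`, for right-hand sides in every normed space. The first
component is the a priori estimate (which contains uniqueness), the second one is existence for
bounded continuous `b`. -/
def Solvable {E : Type} [NormedAddCommGroup E] [NormedSpace ℝ E]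
    (ω : E) (a : E → ℝ) (K : ℝ) : Prop :=
  (∀ (W : Type) [NormedAddCommGroup W] [NormedSpace ℝ W] (p : E → W) (X B : ℝ),
    (∀ z, ‖p z‖ ≤ X) → (∀ z, ‖p (z + ω) - a z • p z‖ ≤ B) → ∀ z, ‖p z‖ ≤ K * B) ∧
  (∀ (W : Type) [NormedAddCommGroup W] [NormedSpace ℝ W] [CompleteSpace W] (b : E → W) (X : ℝ),
    Continuous b → (∀ z, ‖b z‖ ≤ X) →
    ∃ p : E → W, Continuous p ∧ (∃ Y, ∀ z, ‖p z‖ ≤ Y) ∧ ∀ z, p (z + ω) = a z • p z + b z)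

/-- A bounded function whose every bound `X` can be improved to `X / 2 + c` is bounded by `2 c`. -/
lemma norm_le_of_improve {E W : Type} [NormedAddCommGroup W] (D : E → W) (c X₀ : ℝ)
    (h0 : ∀ z, ‖D z‖ ≤ X₀)
    (h : ∀ X, 0 ≤ X → (∀ z, ‖D z‖ ≤ X) → ∀ z, ‖D z‖ ≤ X / 2 + c) (z : E) : ‖D z‖ ≤ 2 * c := by
  have hbdd : BddAbove (Set.range fun z => ‖D z‖) := ⟨X₀, by rintro _ ⟨z, rfl⟩; exact h0 z⟩
  have hle : ∀ z, ‖D z‖ ≤ ⨆ z, ‖D z‖ := fun z => le_ciSup hbdd z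
  have h1 := h _ ((norm_nonneg _).trans (hle z)) hle
  have : Nonempty E := ⟨z⟩
  have h2 : (⨆ z, ‖D z‖) ≤ (⨆ z, ‖D z‖) / 2 + c := ciSup_le h1
  linarith [hle z]

section Solvable

variable {E : Type} [NormedAddCommGroup E] [NormedSpace ℝ E]

/-- A uniform pointwise contraction factor makes the equation solvable: the right-hand side
determines `p` as the fixed point of a contraction. -/
lemma solvable_contract (ω : E) (a : E → ℝ) (ha : Continuous a) (lam : ℝ) (h0 : 0 ≤ lam)
    (h1 : lam < 1) (hlam : ∀ z, |a z| ≤ lam) : Solvable ω a (1 / (1 - lam)) := by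
  constructor
  · intro W _ _ p X B hX hB z
    have hbdd : BddAbove (Set.range fun z => ‖p z‖) := ⟨X, by rintro _ ⟨z, rfl⟩; exact hX z⟩
    have hle : ∀ z, ‖p z‖ ≤ ⨆ z, ‖p z‖ := fun z => le_ciSup hbdd z
    have key : (⨆ z, ‖p z‖) ≤ lam * (⨆ z, ‖p z‖) + B := by
      refine ciSup_le fun z => ?_
      have h2 := hB (z - ω)
      rw [sub_add_cancel] at h2
      calc ‖p z‖ = ‖a (z - ω) • p (z - ω) + (p z - a (z - ω) • p (z - ω))‖ := by
            congr 1; abel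
        _ ≤ ‖a (z - ω) • p (z - ω)‖ + B := (norm_add_le _ _).trans (by gcongr)
        _ ≤ lam * (⨆ z, ‖p z‖) + B := by
            rw [norm_smul, Real.norm_eq_abs]
            gcongr
            · exact hlam _
            · exact hle _
    have hpos : 0 < 1 - lam := by linarith
    rw [one_div, inv_mul_eq_div, le_div_iff₀ hpos]
    nlinarith [hle z]
  · intro W _ _ _ b X hb hX
    have hbound : ∀ (p : BoundedContinuousFunction E W) (z : E),
        ‖a (z - ω) • p (z - ω) + b (z - ω)‖ ≤ lam * ‖p‖ + X := by
      intro p z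
      refine (norm_add_le _ _).trans ?_
      rw [norm_smul, Real.norm_eq_abs]
      gcongr
      · exact hlam _
      · exact p.norm_coe_le_norm _
      · exact hX _
    let Φ : BoundedContinuousFunction E W → BoundedContinuousFunction E W := fun p =>
      BoundedContinuousFunction.ofNormedAddCommGroup
        (fun z => a (z - ω) • p (z - ω) + b (z - ω))
        (by have := p.continuous; fun_prop) _ (hbound p)
    have hΦ : ContractingWith ⟨lam, h0⟩ Φ := by
      refine ⟨by exact_mod_cast h1, LipschitzWith.of_dist_le_mul fun p q => ?_⟩
      rw [BoundedContinuousFunction.dist_le (by positivity)]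
      intro z
      have : Φ p z - Φ q z = a (z - ω) • (p (z - ω) - q (z - ω)) := by
        simp only [Φ, BoundedContinuousFunction.coe_ofNormedAddCommGroup, smul_sub]; abel
      rw [dist_eq_norm, this, norm_smul, Real.norm_eq_abs, ← dist_eq_norm]
      gcongr
      · exact hlam _
      · exact BoundedContinuousFunction.dist_coe_le_dist _
    let p := ContractingWith.fixedPoint Φ hΦ
    have hp : Φ p = p := hΦ.fixedPoint_isFixedPt
    refine ⟨p, p.continuous, ⟨‖p‖, p.norm_coe_le_norm⟩, fun z => ?_⟩
    conv_lhs => rw [← hp]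
    simp [Φ]

/-- Conjugation by a positive weight `ψ`. -/
lemma solvable_weight (ω : E) (a ψ : E → ℝ) (hψ : Continuous ψ) (m M K : ℝ)
    (hm : 0 < m) (hmψ : ∀ z, m ≤ ψ z) (hψM : ∀ z, ψ z ≤ M)
    (h : Solvable ω (fun z => a z * ψ z / ψ (z + ω)) K) : Solvable ω a (M * K / m) := by
  have hpos : ∀ z, 0 < ψ z := fun z => hm.trans_le (hmψ z)
  have hinv : ∀ z, (ψ z)⁻¹ ≤ m⁻¹ := fun z => inv_anti₀ hm (hmψ z)
  constructor
  · intro W _ _ p X B hX hB z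
    have hB0 : 0 ≤ B := (norm_nonneg _).trans (hB z)
    have key := h.1 W (fun z => (ψ z)⁻¹ • p z) (m⁻¹ * X) (m⁻¹ * B) (fun z => by
      rw [norm_smul, Real.norm_eq_abs, abs_of_pos (inv_pos.2 (hpos z))]
      exact mul_le_mul (hinv z) (hX z) (norm_nonneg _) (inv_pos.2 hm).le) (fun z => by
      have : (ψ (z + ω))⁻¹ • p (z + ω) - (a z * ψ z / ψ (z + ω)) • (ψ z)⁻¹ • p z =
          (ψ (z + ω))⁻¹ • (p (z + ω) - a z • p z) := by
        rw [smul_sub, smul_smul, smul_smul]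
        congr 2
        have := (hpos z).ne'
        have := (hpos (z + ω)).ne'
        field_simp
      rw [this, norm_smul, Real.norm_eq_abs, abs_of_pos (inv_pos.2 (hpos _))]
      exact mul_le_mul (hinv _) (hB z) (norm_nonneg _) (inv_pos.2 hm).le) z
    have h2 : ‖p z‖ = ψ z * ‖(ψ z)⁻¹ • p z‖ := by
      rw [norm_smul, Real.norm_eq_abs, abs_of_pos (inv_pos.2 (hpos z)), ← mul_assoc,
        mul_inv_cancel₀ (hpos z).ne', one_mul]
    rw [h2]
    calc ψ z * ‖(ψ z)⁻¹ • p z‖ ≤ M * (K * (m⁻¹ * B)) :=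
          mul_le_mul (hψM z) key (norm_nonneg _) ((hpos z).le.trans (hψM z))
      _ = M * K / m * B := by ring
  · intro W _ _ _ b X hb hX
    obtain ⟨q, hq, ⟨Y, hY⟩, hqe⟩ := h.2 W (fun z => (ψ (z + ω))⁻¹ • b z) (m⁻¹ * X)
      (((hψ.comp (continuous_id.add continuous_const)).inv₀ fun z => (hpos _).ne').smul hb)
      (fun z => by
        rw [norm_smul, Real.norm_eq_abs, abs_of_pos (inv_pos.2 (hpos _))]
        exact mul_le_mul (hinv _) (hX z) (norm_nonneg _) (inv_pos.2 hm).le)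
    refine ⟨fun z => ψ z • q z, hψ.smul hq, ⟨M * Y, fun z => ?_⟩, fun z => ?_⟩
    · rw [norm_smul, Real.norm_eq_abs, abs_of_pos (hpos _)]
      exact mul_le_mul (hψM z) (hY z) (norm_nonneg _) ((hpos z).le.trans (hψM z))
    · simp only [hqe, smul_add, smul_smul]
      have := (hpos (z + ω)).ne'
      congr 2
      · field_simp
      · rw [mul_inv_cancel₀ this, one_smul]

/-- Time reversal: an expanding equation over `ω` is a contracting one over `-ω`. -/
lemma solvable_inv (ω : E) (a : E → ℝ) (ha : Continuous a) (ha1 : ∀ z, 1 ≤ a z) (K : ℝ)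
    (h : Solvable (-ω) (fun z => (a (z - ω))⁻¹) K) : Solvable ω a K := by
  have hpos : ∀ z, 0 < a z := fun z => one_pos.trans_le (ha1 z)
  have hinv : ∀ z, |(a z)⁻¹| ≤ 1 := fun z => by
    rw [abs_of_pos (inv_pos.2 (hpos z))]; exact inv_le_one_of_one_le₀ (ha1 z)
  constructor
  · intro W _ _ p X B hX hB
    refine h.1 W p X B hX fun z => ?_
    have h2 := hB (z - ω)
    rw [sub_add_cancel] at h2
    have : p (z + -ω) - (a (z - ω))⁻¹ • p z =
        -((a (z - ω))⁻¹ • (p z - a (z - ω) • p (z - ω))) := by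
      rw [smul_sub, smul_smul, inv_mul_cancel₀ (hpos _).ne', one_smul, ← sub_eq_add_neg]; abel
    rw [this, norm_neg, norm_smul, Real.norm_eq_abs]
    calc _ ≤ 1 * B := mul_le_mul (hinv _) h2 (norm_nonneg _) zero_le_one
      _ = B := one_mul B
  · intro W _ _ _ b X hb hX
    obtain ⟨p, hp, hpb, hpe⟩ := h.2 W (fun z => -((a (z - ω))⁻¹ • b (z - ω))) X
      (by
        have h3 : Continuous fun z => (a (z - ω))⁻¹ :=
          (ha.comp (continuous_id.sub continuous_const)).inv₀ fun z => (hpos _).ne'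
        fun_prop)
      (fun z => by
        rw [norm_neg, norm_smul, Real.norm_eq_abs]
        calc _ ≤ 1 * X := mul_le_mul (hinv _) (hX _) (norm_nonneg _) zero_le_one
          _ = X := one_mul X)
    refine ⟨p, hp, hpb, fun z => ?_⟩
    have h2 := hpe (z + ω)
    simp only [add_sub_cancel_right, add_neg_cancel_right] at h2
    rw [h2, smul_add, smul_neg, smul_smul, smul_smul, mul_inv_cancel₀ (hpos z).ne', one_smul,
      one_smul, neg_add_cancel_right]

/-- If `α` is cohomologous, by the bounded transfer function `φ`, to a function of definite sign and
size at least `c`, then after conjugation by the weight `exp (ε φ)` the factor `1 + ε α` is bounded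
away from `1` by order `ε`, so that the equation is solvable with a constant `K / ε`, uniformly
in `α`. -/
lemma solvable_eps (ω : E) (φ : E → ℝ) (hφ : Continuous φ) (Φ A c : ℝ) (hΦ : ∀ z, |φ z| ≤ Φ)
    (hA : 0 ≤ A) (hc : 0 < c) :
    ∃ ε₁ : ℝ, 0 < ε₁ ∧ ∃ K : ℝ, 0 < K ∧ ∀ ε, 0 < ε → ε < ε₁ → ∀ α : E → ℝ, Continuous α →
      (∀ z, |α z| ≤ A) →
      ((∀ z, α z + φ z - φ (z + ω) ≤ -c) ∨ (∀ z, c ≤ α z + φ z - φ (z + ω))) →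
      Solvable ω (fun z => 1 + ε * α z) (K / ε) := by
  have hΦ0 : 0 ≤ Φ := (abs_nonneg _).trans (hΦ 0)
  refine ⟨min (1 / (2 * (A + 1))) (c / (4 * (A ^ 2 + 1))), by positivity,
    Real.exp Φ * ((1 + c / 2) / (c / 2)) / Real.exp (-Φ), by positivity,
    fun ε hε hε1 α hα hαA hsign => ?_⟩
  have hεa : ε * (2 * (A + 1)) < 1 := by
    have := hε1.trans_le (min_le_left _ _)
    rwa [lt_div_iff₀ (by positivity)] at this
  have hεb : ε * (4 * (A ^ 2 + 1)) < c := by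
    have := hε1.trans_le (min_le_right _ _)
    rwa [lt_div_iff₀ (by positivity)] at this
  have hεle : ε ≤ 1 := by nlinarith
  have hx : ∀ z, |ε * α z| ≤ 1 / 2 := fun z => by
    rw [abs_mul, abs_of_pos hε]; nlinarith [hαA z]
  have ha : ∀ z, 0 < 1 + ε * α z := fun z => by linarith [(abs_le.1 (hx z)).1]
  -- the common contraction factor
  set lam : ℝ := 1 / (1 + ε * (c / 2)) with hlam
  have hlam0 : 0 ≤ lam := by positivity
  have hlam1 : lam < 1 := by
    rw [hlam, div_lt_one (by positivity)]; nlinarith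
  have hKle : 1 / (1 - lam) ≤ ((1 + c / 2) / (c / 2)) / ε := by
    have h1 : 1 - lam = ε * (c / 2) / (1 + ε * (c / 2)) := by
      rw [hlam]; field_simp; ring
    rw [h1, one_div_div, div_div, mul_comm (c / 2) ε]
    gcongr
    nlinarith
  -- enlarging the constant
  have hmono : ∀ K₁ K₂ : ℝ, K₁ ≤ K₂ → Solvable ω (fun z => 1 + ε * α z) K₁ →
      Solvable ω (fun z => 1 + ε * α z) K₂ := fun K₁ K₂ hle h =>
    ⟨fun W _ _ p X B hX hB z => (h.1 W p X B hX hB z).trans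
      (mul_le_mul_of_nonneg_right hle ((norm_nonneg _).trans (hB z))), h.2⟩
  refine hmono (Real.exp Φ * (1 / (1 - lam)) / Real.exp (-Φ)) _ ?_ ?_
  · calc _ ≤ Real.exp Φ * (((1 + c / 2) / (c / 2)) / ε) / Real.exp (-Φ) := by gcongr
      _ = _ := by ring
  have hψ : Continuous fun z => Real.exp (ε * φ z) := by fun_prop
  refine solvable_weight ω _ (fun z => Real.exp (ε * φ z)) hψ _ _ _
    (Real.exp_pos _) (fun z => ?_) (fun z => ?_) ?_
  · apply Real.exp_le_exp.2
    have := (abs_le.1 (hΦ z)).1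
    nlinarith
  · apply Real.exp_le_exp.2
    have := (abs_le.1 (hΦ z)).2
    nlinarith
  have hcont : Continuous fun z =>
      (1 + ε * α z) * Real.exp (ε * φ z) / Real.exp (ε * φ (z + ω)) := by
    refine Continuous.div (by fun_prop) (by fun_prop) fun z => (Real.exp_pos _).ne'
  have heq : ∀ z, (1 + ε * α z) * Real.exp (ε * φ z) / Real.exp (ε * φ (z + ω)) =
      (1 + ε * α z) * Real.exp (ε * (φ z - φ (z + ω))) := fun z => by
    rw [mul_div_assoc, ← Real.exp_sub, mul_sub]
  rcases hsign with hs | hs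
  · refine solvable_contract ω _ hcont lam hlam0 hlam1 fun z => ?_
    rw [heq, abs_of_pos (mul_pos (ha z) (Real.exp_pos _))]
    calc (1 + ε * α z) * Real.exp (ε * (φ z - φ (z + ω)))
        ≤ Real.exp (ε * α z) * Real.exp (ε * (φ z - φ (z + ω))) := by
          gcongr; linarith [Real.add_one_le_exp (ε * α z)]
      _ = Real.exp (ε * (α z + φ z - φ (z + ω))) := by rw [← Real.exp_add]; ring_nf
      _ ≤ Real.exp (-(ε * (c / 2))) := by
          apply Real.exp_le_exp.2; nlinarith [hs z]
      _ ≤ lam := by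
          rw [Real.exp_neg, hlam, one_div]
          apply inv_anti₀ (by positivity)
          linarith [Real.add_one_le_exp (ε * (c / 2))]
  · have hlow : ∀ z, 1 + ε * (c / 2) ≤
        (1 + ε * α z) * Real.exp (ε * φ z) / Real.exp (ε * φ (z + ω)) := fun z => by
      rw [heq]
      -- `1 / (1 + x) ≤ 1 - x + 2 x ^ 2 ≤ exp (-x + 2 x ^ 2)` for `x ≥ -1/2`
      have h1 : Real.exp (ε * α z - 2 * (ε * α z) ^ 2) ≤ 1 + ε * α z := by
        have h2 := Real.add_one_le_exp (-(ε * α z) + 2 * (ε * α z) ^ 2)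
        have h3 : 1 ≤ (1 + ε * α z) * Real.exp (-(ε * α z) + 2 * (ε * α z) ^ 2) := by
          refine le_trans ?_ (mul_le_mul_of_nonneg_left h2 (ha z).le)
          have := (abs_le.1 (hx z)).1
          nlinarith [sq_nonneg (ε * α z), mul_nonneg (sq_nonneg (ε * α z))
            (by linarith : 0 ≤ 1 + 2 * (ε * α z))]
        have h4 : ε * α z - 2 * (ε * α z) ^ 2 = -(-(ε * α z) + 2 * (ε * α z) ^ 2) := by ring
        rw [h4, Real.exp_neg, inv_le_iff_one_le_mul₀ (Real.exp_pos _)]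
        linarith
      have hsq : (ε * α z) ^ 2 ≤ ε * (c / 4) := by
        have h5 : α z ^ 2 ≤ A ^ 2 := sq_le_sq' (by linarith [(abs_le.1 (hαA z)).1])
          (abs_le.1 (hαA z)).2
        have h6 : ε * α z ^ 2 ≤ c / 4 := by nlinarith
        calc (ε * α z) ^ 2 = ε * (ε * α z ^ 2) := by ring
          _ ≤ _ := by gcongr
      calc 1 + ε * (c / 2) ≤ Real.exp (ε * (c / 2)) := by
            linarith [Real.add_one_le_exp (ε * (c / 2))]
        _ ≤ Real.exp ((ε * α z - 2 * (ε * α z) ^ 2) + ε * (φ z - φ (z + ω))) := by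
            apply Real.exp_le_exp.2; nlinarith [hs z]
        _ = Real.exp (ε * α z - 2 * (ε * α z) ^ 2) * Real.exp (ε * (φ z - φ (z + ω))) :=
            Real.exp_add _ _
        _ ≤ _ := by gcongr
    have h1le : ∀ z, 1 ≤ (1 + ε * α z) * Real.exp (ε * φ z) / Real.exp (ε * φ (z + ω)) :=
      fun z => le_trans (by nlinarith) (hlow z)
    refine solvable_inv ω _ hcont h1le _ (solvable_contract (-ω) _ ?_ lam hlam0 hlam1 fun z => ?_)
    · exact (hcont.comp (continuous_id.sub continuous_const)).inv₀
        fun z => (one_pos.trans_le (h1le _)).ne'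
    · rw [abs_of_pos (inv_pos.2 (one_pos.trans_le (h1le _))), hlam, one_div]
      exact inv_anti₀ (by positivity) (hlow _)

end Solvable

/-! ### Periodic functions -/

/-- `ℤⁿ`-periodicity of a function on `ℝⁿ`. -/
def Per {n : ℕ} {W : Type} (f : (Fin n → ℝ) → W) : Prop :=
  ∀ (σ : Fin n → ℝ) (k : Fin n → ℤ), f (σ + fun i => (k i : ℝ)) = f σ

section Periodic

variable {n : ℕ} {W : Type} [NormedAddCommGroup W]

lemma exists_int_translate (z : Fin n → ℝ) :
    ∃ k : Fin n → ℤ, (z + fun i => (k i : ℝ)) ∈ Set.Icc (0 : Fin n → ℝ) 1 := by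
  refine ⟨fun i => -⌊z i⌋, ?_, ?_⟩
  · intro i
    simp only [Pi.zero_apply, Pi.add_apply, Int.cast_neg]
    linarith [Int.floor_le (z i)]
  · intro i
    simp only [Pi.one_apply, Pi.add_apply, Int.cast_neg]
    linarith [Int.lt_floor_add_one (z i)]

lemma Per.bounded {f : (Fin n → ℝ) → W} (hf : Continuous f) (hp : Per f) :
    ∃ X, 0 ≤ X ∧ ∀ z, ‖f z‖ ≤ X := by
  obtain ⟨X, hX⟩ := (isCompact_Icc (a := (0 : Fin n → ℝ)) (b := 1)).exists_bound_of_continuousOn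
    hf.continuousOn
  refine ⟨max X 0, le_max_right _ _, fun z => ?_⟩
  obtain ⟨k, hk⟩ := exists_int_translate z
  rw [← hp z k]
  exact (hX _ hk).trans (le_max_left _ _)

lemma Per.unifCont {f : (Fin n → ℝ) → W} (hf : Continuous f) (hp : Per f) (e : ℝ) (he : 0 < e) :
    ∃ δ, 0 < δ ∧ ∀ x y, dist x y < δ → ‖f y - f x‖ < e := by
  have h := (isCompact_Icc (a := (0 : Fin n → ℝ)) (b := 1)).uniformContinuousAt_of_continuousAt f
    (fun a _ => hf.continuousAt) (Metric.dist_mem_uniformity he)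
  obtain ⟨δ, hδ, h⟩ := Metric.mem_uniformity_dist.1 h
  refine ⟨δ, hδ, fun x y hxy => ?_⟩
  obtain ⟨k, hk⟩ := exists_int_translate x
  have h1 := @h (x + fun i => (k i : ℝ)) (y + fun i => (k i : ℝ))
    (by rwa [dist_add_right]) hk
  simp only [Set.mem_ofPred_eq] at h1
  rw [hp, hp, dist_comm, dist_eq_norm] at h1
  exact h1

variable [NormedSpace ℝ W]

lemma Per.fderiv {f : (Fin n → ℝ) → W} (hp : Per f) : Per (fderiv ℝ f) := by
  intro σ k
  rw [← fderiv_comp_add_right]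
  congr 1
  ext z
  exact hp z k

lemma Per.lipschitz {f : (Fin n → ℝ) → W} (hf : ContDiff ℝ 1 f) (hp : Per f) :
    ∃ X, 0 ≤ X ∧ ∀ z h, ‖f (z + h) - f z‖ ≤ X * ‖h‖ := by
  obtain ⟨X, hX0, hX⟩ := hp.fderiv.bounded (hf.continuous_fderiv one_ne_zero)
  refine ⟨X, hX0, fun z h => ?_⟩
  have := (convex_univ (𝕜 := ℝ) (E := Fin n → ℝ)).norm_image_sub_le_of_norm_fderiv_le
    (fun x _ => hf.differentiable one_ne_zero x) (fun x _ => hX x) (Set.mem_univ z)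
    (Set.mem_univ (z + h))
  simpa using this

/-- A `C¹` periodic function is differentiable uniformly in the base point. -/
lemma Per.unif_diff {f : (Fin n → ℝ) → W} (hf : ContDiff ℝ 1 f) (hp : Per f) (e : ℝ)
    (he : 0 < e) :
    ∃ δ, 0 < δ ∧ ∀ z h, ‖h‖ < δ → ‖f (z + h) - f z - _root_.fderiv ℝ f z h‖ ≤ e * ‖h‖ := by
  obtain ⟨δ, hδ, h⟩ := hp.fderiv.unifCont (hf.continuous_fderiv one_ne_zero) e he
  refine ⟨δ, hδ, fun z v hv => ?_⟩
  have := (convex_ball z δ).norm_image_sub_le_of_norm_hasFDerivWithin_le' (𝕜 := ℝ) (f := f)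
    (f' := _root_.fderiv ℝ f) (φ := _root_.fderiv ℝ f z) (C := e) (x := z) (y := z + v)
    (fun x _ => (hf.differentiable one_ne_zero x).hasFDerivAt.hasFDerivWithinAt)
    (fun x hx => (h z x (by rwa [dist_comm])).le) (Metric.mem_ball_self hδ)
    (by simpa using hv)
  simpa using this

lemma Per.of_solution {ω : Fin n → ℝ} {a : (Fin n → ℝ) → ℝ} {K : ℝ} (hs : Solvable ω a K)
    (ha : Per a) {b p : (Fin n → ℝ) → W} (hb : Per b) (hbd : ∃ Y, ∀ z, ‖p z‖ ≤ Y)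
    (he : ∀ z, p (z + ω) = a z • p z + b z) : Per p := by
  obtain ⟨Y, hY⟩ := hbd
  intro σ k
  have h := hs.1 W (fun z => p (z + fun i => (k i : ℝ)) - p z) (Y + Y) 0
    (fun z => (norm_sub_le _ _).trans (add_le_add (hY _) (hY _))) (fun z => by
      have h1 : p (z + ω + fun i => (k i : ℝ)) =
          a z • p (z + fun i => (k i : ℝ)) + b z := by
        rw [add_right_comm, he, ha, hb]
      rw [h1, he, smul_sub]
      simp) σ
  simp only [mul_zero, norm_le_zero_iff] at h
  exact sub_eq_zero.1 h

end Periodic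

/-! ### Smoothness of bounded solutions -/

section Smooth

/-- If the increments of `w` satisfy, to first order and uniformly, the same twisted equation as
`q`, then `q` is the derivative of `w`. -/
lemma hasFDerivAt_of_solvable {E W : Type} [NormedAddCommGroup E] [NormedSpace ℝ E]
    [NormedAddCommGroup W] [NormedSpace ℝ W] {ω : E} {a : E → ℝ} {K : ℝ} (hK : 0 ≤ K)
    (hs : Solvable ω a K) (w : E → W) (q : E → (E →L[ℝ] W)) (hw : ∃ Y, ∀ z, ‖w z‖ ≤ Y)
    (hq : ∃ Y, ∀ z, ‖q z‖ ≤ Y)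
    (h : ∀ e, 0 < e → ∃ δ, 0 < δ ∧ ∀ z v, ‖v‖ < δ →
      ‖(w (z + ω + v) - w (z + ω) - q (z + ω) v) - a z • (w (z + v) - w z - q z v)‖ ≤ e * ‖v‖)
    (z : E) : HasFDerivAt w (q z) z := by
  obtain ⟨Y, hY⟩ := hw
  obtain ⟨Y', hY'⟩ := hq
  rw [hasFDerivAt_iff_isLittleO_nhds_zero, Asymptotics.isLittleO_iff]
  intro c hc
  obtain ⟨δ, hδ, h⟩ := h (c / (K + 1)) (by positivity)
  filter_upwards [Metric.ball_mem_nhds (0 : E) hδ] with v hv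
  rw [mem_ball_zero_iff] at hv
  refine (hs.1 W (fun z => w (z + v) - w z - q z v) (Y + Y + Y' * ‖v‖) _ (fun z => ?_)
    (fun z => h z v hv) z).trans ?_
  · refine (norm_sub_le _ _).trans (add_le_add ((norm_sub_le _ _).trans
      (add_le_add (hY _) (hY _))) (((q z).le_opNorm v).trans ?_))
    exact mul_le_mul_of_nonneg_right (hY' z) (norm_nonneg _)
  · rw [← mul_assoc]
    gcongr
    rw [mul_div_assoc', div_le_iff₀ (by positivity)]
    nlinarith

/-- Bounded solutions of a solvable linear equation are as smooth as its data: the derivative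
of a solution solves an equation with the same factor `a`. -/
lemma contDiff_solution {n : ℕ} {ω : Fin n → ℝ} {a : (Fin n → ℝ) → ℝ} {K : ℝ} (hK : 0 ≤ K)
    (hs : Solvable ω a K) (hap : Per a) (k : ℕ) : ContDiff ℝ k a →
    ∀ (W : Type) [NormedAddCommGroup W] [NormedSpace ℝ W] [CompleteSpace W]
    (b p : (Fin n → ℝ) → W), ContDiff ℝ k b → Per b → (∃ Y, ∀ z, ‖p z‖ ≤ Y) →
    (∀ z, p (z + ω) = a z • p z + b z) → ContDiff ℝ k p := by
  induction k with
  | zero =>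
    intro _ W _ _ _ b p hb hbp hpb he
    obtain ⟨Y, hY⟩ := hpb
    rw [Nat.cast_zero, contDiff_zero] at hb ⊢
    obtain ⟨X, hX0, hX⟩ := hbp.bounded hb
    obtain ⟨p', hp', ⟨Y', hY'⟩, he'⟩ := hs.2 W b X hb hX
    -- the given solution is the continuous one, by uniqueness
    have : p = p' := by
      ext1 z
      have h := hs.1 W (fun z => p z - p' z) (Y + Y')  0
        (fun z => (norm_sub_le _ _).trans (add_le_add (hY _) (hY' _)))
        (fun z => by rw [he, he', smul_sub]; simp) z
      simp only [mul_zero, norm_le_zero_iff] at h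
      exact sub_eq_zero.1 h
    rw [this]; exact hp'
  | succ k ih =>
    intro ha W _ _ _ b p hb hbp hpb he
    have hpk : ContDiff ℝ k p :=
      ih (ha.of_le (by exact_mod_cast Nat.le_succ k)) W b p
        (hb.of_le (by exact_mod_cast Nat.le_succ k)) hbp hpb he
    have ha1 : ContDiff ℝ 1 a := ha.of_le (by exact_mod_cast Nat.le_add_left 1 k)
    have hb1 : ContDiff ℝ 1 b := hb.of_le (by exact_mod_cast Nat.le_add_left 1 k)
    have hpp : Per p := Per.of_solution hs hap hbp hpb he
    have hda : ContDiff ℝ k (fderiv ℝ a) := ha.fderiv_right (by exact_mod_cast le_rfl)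
    have hdb : ContDiff ℝ k (fderiv ℝ b) := hb.fderiv_right (by exact_mod_cast le_rfl)
    -- the inhomogeneity of the differentiated equation
    let b' : (Fin n → ℝ) → ((Fin n → ℝ) →L[ℝ] W) := fun z =>
      (fderiv ℝ a z).smulRight (p z) + fderiv ℝ b z
    have hb' : ContDiff ℝ k b' := (hda.smulRight hpk).add hdb
    have hb'p : Per b' := fun σ m => by
      simp only [b', hap.fderiv σ m, hpp σ m, hbp.fderiv σ m]
    obtain ⟨X, hX0, hX⟩ := hb'p.bounded hb'.continuous
    obtain ⟨q, hq, hqb, hqe⟩ := hs.2 _ b' X hb'.continuous hX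
    have hqk : ContDiff ℝ k q := ih (ha.of_le (by exact_mod_cast Nat.le_succ k)) _ b' q hb' hb'p
      hqb hqe
    obtain ⟨La, hLa0, hLa⟩ := hap.lipschitz ha1
    obtain ⟨Y, hY0, hY⟩ := hpp.bounded hpk.continuous
    have hder : ∀ z, HasFDerivAt p (q z) z := by
      refine hasFDerivAt_of_solvable hK hs p q hpb hqb fun e he0 => ?_
      obtain ⟨δ₁, hδ₁, h1⟩ := hap.unif_diff ha1 (e / (3 * (Y + 1))) (by positivity)
      obtain ⟨δ₂, hδ₂, h2⟩ := hbp.unif_diff hb1 (e / 3) (by positivity)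
      obtain ⟨δ₃, hδ₃, h3⟩ := hpp.unifCont hpk.continuous (e / (3 * (La + 1))) (by positivity)
      refine ⟨min δ₁ (min δ₂ δ₃), by positivity, fun z v hv => ?_⟩
      have hv1 := hv.trans_le (min_le_left _ _)
      have hv2 := hv.trans_le ((min_le_right _ _).trans (min_le_left _ _))
      have hv3 := hv.trans_le ((min_le_right _ _).trans (min_le_right _ _))
      have hsplit : (p (z + ω + v) - p (z + ω) - q (z + ω) v) - a z • (p (z + v) - p z - q z v) =
          (a (z + v) - a z - fderiv ℝ a z v) • p z + (a (z + v) - a z) • (p (z + v) - p z)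
          + (b (z + v) - b z - fderiv ℝ b z v) := by
        rw [add_right_comm z ω v, he, he, hqe]
        simp only [b', add_apply, ContinuousLinearMap.smulRight_apply, smul_apply, sub_smul,
          smul_sub]
        abel
      rw [hsplit]
      have e1 : ‖(a (z + v) - a z - fderiv ℝ a z v) • p z‖ ≤ e / 3 * ‖v‖ := by
        rw [norm_smul]
        calc _ ≤ (e / (3 * (Y + 1)) * ‖v‖) * Y :=
              mul_le_mul (h1 z v hv1) (hY z) (norm_nonneg _) (by positivity)
          _ = (e / 3 * ‖v‖) * (Y / (Y + 1)) := by field_simp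
          _ ≤ (e / 3 * ‖v‖) * 1 := by
              gcongr; rw [div_le_one (by positivity)]; linarith
          _ = _ := mul_one _
      have e2 : ‖(a (z + v) - a z) • (p (z + v) - p z)‖ ≤ e / 3 * ‖v‖ := by
        rw [norm_smul]
        calc _ ≤ (La * ‖v‖) * (e / (3 * (La + 1))) :=
              mul_le_mul (hLa z v) (h3 z (z + v) (by simpa using hv3)).le (norm_nonneg _)
                (by positivity)
          _ = (e / 3 * ‖v‖) * (La / (La + 1)) := by field_simp
          _ ≤ (e / 3 * ‖v‖) * 1 := by
              gcongr; rw [div_le_one (by positivity)]; linarith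
          _ = _ := mul_one _
      have e3 := h2 z v hv2
      calc _ ≤ e / 3 * ‖v‖ + e / 3 * ‖v‖ + e / 3 * ‖v‖ :=
            (norm_add_le _ _).trans (add_le_add ((norm_add_le _ _).trans (add_le_add e1 e2)) e3)
        _ = e * ‖v‖ := by ring
    have hfd : fderiv ℝ p = q := funext fun z => (hder z).fderiv
    rw [Nat.cast_succ, contDiff_succ_iff_fderiv]
    refine ⟨fun z => (hder z).differentiableAt, fun h => ?_, by rwa [hfd]⟩
    exact absurd h (by simp)

end Smooth

/-! ### Invariant graphs of skew products over a translation -/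

section Skew

variable {n : ℕ} {ω : Fin n → ℝ} {G : (Fin n → ℝ) × ℝ → ℝ} {C₁ C₂ : ℝ}

/-- First-order Taylor estimate around `p` for a function whose derivative is
`C₂`-Lipschitz. -/
lemma taylor_bound (hG : ContDiff ℝ (⊤ : ℕ∞) G)
    (hC₂ : ∀ p q, ‖fderiv ℝ G p - fderiv ℝ G q‖ ≤ C₂ * ‖p - q‖) (hC0 : 0 ≤ C₂)
    (p x y : (Fin n → ℝ) × ℝ) (r : ℝ) (hx : ‖x - p‖ ≤ r) (hy : ‖y - p‖ ≤ r) :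
    |G y - G x - fderiv ℝ G p (y - x)| ≤ C₂ * r * ‖y - x‖ := by
  refine (convex_closedBall p r).norm_image_sub_le_of_norm_hasFDerivWithin_le' (𝕜 := ℝ) (f := G)
    (f' := fderiv ℝ G) (fun z _ => ((hG.differentiable (by simp)) z).hasFDerivAt.hasFDerivWithinAt)
    (fun z hz => (hC₂ z p).trans ?_) ?_ ?_
  · rw [mem_closedBall_iff_norm] at hz
    gcongr
  · rwa [mem_closedBall_iff_norm]
  · rwa [mem_closedBall_iff_norm]

/-- Taylor estimate in the fibre direction only. -/
lemma taylor_fibre (hG : ContDiff ℝ (⊤ : ℕ∞) G)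
    (hC₂ : ∀ p q, ‖fderiv ℝ G p - fderiv ℝ G q‖ ≤ C₂ * ‖p - q‖) (hC0 : 0 ≤ C₂)
    (z : Fin n → ℝ) (t s s' r : ℝ) (hs : |s| ≤ r) (hs' : |s'| ≤ r) :
    |G (z, t + s) - G (z, t + s') - fderiv ℝ G (z, t) (0, 1) * (s - s')| ≤ C₂ * r * |s - s'| := by
  have h := taylor_bound hG hC₂ hC0 (z, t) (z, t + s') (z, t + s) r
    (by simpa [Prod.norm_def] using hs')
    (by simpa [Prod.norm_def] using hs)
  have h1 : ((z, t + s) : (Fin n → ℝ) × ℝ) - (z, t + s') = (s - s') • (0, 1) := by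
    ext <;> simp
  have h2 : ‖(s - s') • ((0, 1) : (Fin n → ℝ) × ℝ)‖ = |s - s'| := by
    rw [norm_smul]; simp [Prod.norm_def]
  rw [h1, map_smul, h2, smul_eq_mul, mul_comm (s - s')] at h
  exact h

/-- Quasi-Newton step: near an approximately invariant graph `S` there is an invariant one,
provided the equation linearized at `S` is solvable. -/
lemma exists_invariant_graph (hG : ContDiff ℝ (⊤ : ℕ∞) G)
    (hGp : ∀ z t (k : Fin n → ℤ), G (z + fun i => (k i : ℝ), t) = G (z, t))
    (hC₂ : ∀ p q, ‖fderiv ℝ G p - fderiv ℝ G q‖ ≤ C₂ * ‖p - q‖) (hC0 : 0 ≤ C₂)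
    {ε K : ℝ} (hε : 0 < ε) (hK : 0 < K) {S : (Fin n → ℝ) → ℝ} (hS : Continuous S) (hSp : Per S)
    (hs : Solvable ω (fun z => 1 + ε * fderiv ℝ G (z, S z) (0, 1)) (K / ε)) {ρ r : ℝ}
    (hr : r = 2 * K / ε * ρ) (hρ : 0 ≤ ρ) (hr1 : K * C₂ * r ≤ 1 / 2)
    (hres : ∀ z, |S z + ε * G (z, S z) - S (z + ω)| ≤ ρ) :
    ∃ T : (Fin n → ℝ) → ℝ, Continuous T ∧ Per T ∧ (∀ z, T (z + ω) = T z + ε * G (z, T z)) ∧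
      ∀ z, |T z - S z| ≤ r := by
  have hr0 : 0 ≤ r := by rw [hr]; positivity
  have hGc : Continuous G := hG.continuous
  have hdG : Continuous (fderiv ℝ G) := hG.continuous_fderiv (by simp)
  -- the inhomogeneity of the equation for the correction `η = T - S`
  let Q : (Fin n → ℝ) → ℝ → ℝ := fun z s =>
    ε * (G (z, S z + s) - G (z, S z) - fderiv ℝ G (z, S z) (0, 1) * s) +
      (S z + ε * G (z, S z) - S (z + ω))
  have hQdiff : ∀ z s s' R, |s| ≤ R → |s'| ≤ R → |Q z s - Q z s'| ≤ ε * (C₂ * R * |s - s'|) := by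
    intro z s s' R h1 h2
    have h3 := taylor_fibre hG hC₂ hC0 z (S z) s s' R h1 h2
    have h4 : Q z s - Q z s' = ε * (G (z, S z + s) - G (z, S z + s') -
        fderiv ℝ G (z, S z) (0, 1) * (s - s')) := by
      simp only [Q]; ring
    rw [h4, abs_mul, abs_of_pos hε]
    gcongr
  have hQ0 : ∀ z, |Q z 0| ≤ ρ := fun z => by simpa [Q] using hres z
  have hQb : ∀ z s R, |s| ≤ R → |Q z s| ≤ ε * (C₂ * R * R) + ρ := by
    intro z s R h1
    have hR : 0 ≤ R := (abs_nonneg _).trans h1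
    have h2 := hQdiff z s 0 R h1 (by simpa using hR)
    rw [sub_zero] at h2
    have h3 : |Q z s| ≤ |Q z s - Q z 0| + |Q z 0| := by
      simpa using abs_add_le (Q z s - Q z 0) (Q z 0)
    have h4 : C₂ * R * |s| ≤ C₂ * R * R := by gcongr
    nlinarith [hQ0 z]
  have hsol : ∀ η : BoundedContinuousFunction (Fin n → ℝ) ℝ,
      ∃ p : BoundedContinuousFunction (Fin n → ℝ) ℝ, ∀ z,
        p (z + ω) = (1 + ε * fderiv ℝ G (z, S z) (0, 1)) * p z + Q z (η z) := by
    intro η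
    obtain ⟨p, hp, ⟨Y, hY⟩, he⟩ := hs.2 ℝ (fun z => Q z (η z)) (ε * (C₂ * ‖η‖ * ‖η‖) + ρ)
      (by
        have := η.continuous
        have h1 : Continuous fun z => fderiv ℝ G (z, S z) (0, 1) :=
          (hdG.comp (continuous_id.prodMk hS)).clm_apply continuous_const
        simp only [Q]
        fun_prop)
      (fun z => hQb z _ _ (η.norm_coe_le_norm z))
    exact ⟨BoundedContinuousFunction.ofNormedAddCommGroup p hp Y hY, he⟩
  choose Ψ hΨ using hsol
  have hest := hs.1 ℝ
  have hcancel : K / ε * ε = K := by field_simp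
  have hmaps : Set.MapsTo Ψ (Metric.closedBall 0 r) (Metric.closedBall 0 r) := by
    intro η hη
    rw [mem_closedBall_zero_iff] at hη ⊢
    rw [BoundedContinuousFunction.norm_le hr0]
    intro z
    refine (hest (Ψ η) ‖Ψ η‖ (ε * (C₂ * r * r) + ρ) (Ψ η).norm_coe_le_norm (fun z => ?_) z).trans ?_
    · rw [hΨ, smul_eq_mul, add_sub_cancel_left]
      exact hQb z _ _ ((η.norm_coe_le_norm z).trans hη)
    · calc K / ε * (ε * (C₂ * r * r) + ρ) = (K / ε * ε) * C₂ * r * r + (2 * K / ε * ρ) / 2 := by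
            ring
        _ = K * C₂ * r * r + r / 2 := by rw [hcancel, ← hr]
        _ ≤ r := by nlinarith
  have hdist : ∀ (f g : (Fin n → ℝ) → ℝ) (η θ : (Fin n → ℝ) → ℝ) (X Y : ℝ),
      (∀ z, |f z| ≤ Y) → (∀ z, |g z| ≤ Y) → (∀ z, |η z| ≤ r) → (∀ z, |θ z| ≤ r) →
      (∀ z, f (z + ω) = (1 + ε * fderiv ℝ G (z, S z) (0, 1)) * f z + Q z (η z)) →
      (∀ z, g (z + ω) = (1 + ε * fderiv ℝ G (z, S z) (0, 1)) * g z + Q z (θ z)) →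
      (∀ z, |η z - θ z| ≤ X) → ∀ z, |f z - g z| ≤ X / 2 := by
    intro f g η θ X Y hf hg hη hθ hfe hge hX z
    have hX0 : 0 ≤ X := (abs_nonneg _).trans (hX z)
    refine (hest (fun z => f z - g z) (Y + Y) (ε * (C₂ * r * X))
      (fun z => (norm_sub_le _ _).trans (add_le_add (hf z) (hg z))) (fun z => ?_) z).trans ?_
    · rw [hfe, hge, smul_eq_mul, Real.norm_eq_abs]
      have h1 : ∀ c f g q q' : ℝ, c * f + q - (c * g + q') - c * (f - g) = q - q' := by
        intros; ring
      rw [h1]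
      refine (hQdiff z _ _ r (hη z) (hθ z)).trans ?_
      have := hX z
      gcongr
    · calc K / ε * (ε * (C₂ * r * X)) = (K / ε * ε) * C₂ * r * X := by ring
        _ = (K * C₂ * r) * X := by rw [hcancel]
        _ ≤ 1 / 2 * X := by gcongr
        _ = X / 2 := by ring
  have hcontr : ContractingWith (1 / 2) (hmaps.restrict Ψ _ _) := by
    refine ⟨NNReal.half_lt_self one_ne_zero, LipschitzWith.of_dist_le_mul fun η θ => ?_⟩
    obtain ⟨η, hη⟩ := η
    obtain ⟨θ, hθ⟩ := θ
    have hη' := mem_closedBall_zero_iff.1 hη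
    have hθ' := mem_closedBall_zero_iff.1 hθ
    rw [Subtype.dist_eq, Subtype.dist_eq, BoundedContinuousFunction.dist_le (by positivity)]
    intro z
    have h := hdist (Ψ η) (Ψ θ) η θ (dist η θ) (max ‖Ψ η‖ ‖Ψ θ‖)
      (fun z => ((Ψ η).norm_coe_le_norm z).trans (le_max_left _ _))
      (fun z => ((Ψ θ).norm_coe_le_norm z).trans (le_max_right _ _))
      (fun z => (η.norm_coe_le_norm z).trans hη') (fun z => (θ.norm_coe_le_norm z).trans hθ')
      (hΨ η) (hΨ θ) (fun z => (BoundedContinuousFunction.dist_coe_le_dist z : dist (η z) (θ z) ≤ _)) z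
    have h2 : ((1 / 2 : NNReal) : ℝ) * dist η θ = dist η θ / 2 := by
      push_cast; ring
    simp only [Set.MapsTo.val_restrict_apply]
    rw [h2]
    exact h
  obtain ⟨η, hη, hfix, -⟩ := hcontr.exists_fixedPoint' Metric.isClosed_closedBall.isComplete hmaps
    (Metric.mem_closedBall_self hr0) (edist_ne_top _ _)
  have hηr : ∀ z, |η z| ≤ r := fun z =>
    (η.norm_coe_le_norm z).trans (mem_closedBall_zero_iff.1 hη)
  have hηe : ∀ z, η (z + ω) = (1 + ε * fderiv ℝ G (z, S z) (0, 1)) * η z + Q z (η z) := by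
    intro z
    have := hΨ η z
    rwa [hfix.eq] at this
  have hηp : Per η := by
    intro σ k
    have hdGp : ∀ z t, fderiv ℝ G (z + fun i => (k i : ℝ), t) = fderiv ℝ G (z, t) := by
      intro z t
      have h1 : ((z + fun i => (k i : ℝ), t) : (Fin n → ℝ) × ℝ) =
          (z, t) + ((fun i => (k i : ℝ)), 0) := by simp
      rw [h1, ← fderiv_comp_add_right]
      congr 1
      ext ⟨z, t⟩
      simpa using hGp z t k
    -- `η` and its translate solve the same fixed-point equation
    have h := norm_le_of_improve (fun z => η (z + fun i => (k i : ℝ)) - η z) 0 (r + r)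
      (fun z => (norm_sub_le _ _).trans (add_le_add (hηr _) (hηr _))) (fun X _ hX z => by
        rw [add_zero]
        refine hdist (fun z => η (z + fun i => (k i : ℝ))) η
          (fun z => η (z + fun i => (k i : ℝ))) η X r (fun z => hηr _) hηr (fun z => hηr _) hηr
          (fun z => ?_) hηe hX z
        simp only [add_right_comm z ω]
        rw [hηe]
        simp only [Q, hSp z k, hGp, hdGp, add_right_comm z _ ω, hSp (z + ω) k]) σ
    simp only [mul_zero, norm_le_zero_iff] at h
    exact sub_eq_zero.1 h
  refine ⟨fun z => S z + η z, hS.add η.continuous, fun σ k => ?_, fun z => ?_, fun z => ?_⟩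
  · simp only [hSp σ k, hηp σ k]
  · simp only [hηe]
    simp only [Q]
    ring
  · simpa using hηr z

/-- A small continuous invariant graph at which the linearized equation is solvable is smooth. -/
lemma contDiff_invariant_graph (hG : ContDiff ℝ (⊤ : ℕ∞) G)
    (hGp : ∀ z t (k : Fin n → ℤ), G (z + fun i => (k i : ℝ), t) = G (z, t))
    (hC₁ : ∀ p, ‖fderiv ℝ G p‖ ≤ C₁)
    (hC₂ : ∀ p q, ‖fderiv ℝ G p - fderiv ℝ G q‖ ≤ C₂ * ‖p - q‖) (hC0 : 0 ≤ C₂)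
    {ε K δ : ℝ} (hε : 0 < ε) (hK : 0 < K) {T : (Fin n → ℝ) → ℝ} (hT : Continuous T) (hTp : Per T)
    (hs : Solvable ω (fun z => 1 + ε * fderiv ℝ G (z, T z) (0, 1)) (K / ε))
    (hTδ : ∀ z, |T z| ≤ δ) (hδ : K * C₂ * (2 * δ) ≤ 1 / 2)
    (he : ∀ z, T (z + ω) = T z + ε * G (z, T z)) (m : ℕ) : ContDiff ℝ m T := by
  have hC₁0 : 0 ≤ C₁ := (norm_nonneg _).trans (hC₁ 0)
  have hdG : ContDiff ℝ (⊤ : ℕ∞) (fderiv ℝ G) := hG.fderiv_right (by simp)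
  have hcancel : K / ε * ε = K := by field_simp
  have hdGp : ∀ z t (k : Fin n → ℤ),
      fderiv ℝ G (z + fun i => (k i : ℝ), t) = fderiv ℝ G (z, t) := by
    intro z t k
    have h1 : ((z + fun i => (k i : ℝ), t) : (Fin n → ℝ) × ℝ) =
        (z, t) + ((fun i => (k i : ℝ)), 0) := by simp
    rw [h1, ← fderiv_comp_add_right]
    congr 1
    ext ⟨z, t⟩
    simpa using hGp z t k
  -- Lipschitz bound: the quadratic term is absorbed because `T` is small
  have hlip : ∀ v z, |T (z + v) - T z| ≤ 2 * (K * C₁ * ‖v‖) := by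
    intro v
    refine norm_le_of_improve (fun z => T (z + v) - T z) _ (δ + δ)
      (fun z => (norm_sub_le _ _).trans (add_le_add (hTδ _) (hTδ _))) (fun X hX0 hX z => ?_)
    refine (hs.1 ℝ (fun z => T (z + v) - T z) X (ε * (C₁ * ‖v‖ + C₂ * (2 * δ) * X)) hX
      (fun z => ?_) z).trans ?_
    · have h1 : T (z + ω + v) - T (z + ω) -
          (1 + ε * fderiv ℝ G (z, T z) (0, 1)) * (T (z + v) - T z) =
          ε * ((G (z + v, T (z + v)) - G (z, T (z + v))) +
            (G (z, T z + (T (z + v) - T z)) - G (z, T z + 0) -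
              fderiv ℝ G (z, T z) (0, 1) * ((T (z + v) - T z) - 0))) := by
        rw [add_right_comm z ω v, he, he]
        simp only [add_sub_cancel, add_zero, sub_zero]
        ring
      have hd : |T (z + v) - T z| ≤ 2 * δ := by
        have := (abs_sub (T (z + v)) (T z)).trans (add_le_add (hTδ _) (hTδ _))
        linarith
      have h2 := taylor_fibre hG hC₂ hC0 z (T z) (T (z + v) - T z) 0 (2 * δ) hd
        (by simpa using (abs_nonneg _).trans hd)
      have h3 : |G (z + v, T (z + v)) - G (z, T (z + v))| ≤ C₁ * ‖v‖ := by
        have := (convex_univ (𝕜 := ℝ) (E := (Fin n → ℝ) × ℝ)).norm_image_sub_le_of_norm_fderiv_le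
          (fun x _ => hG.differentiable (by simp) x) (fun x _ => hC₁ x)
          (Set.mem_univ (z, T (z + v))) (Set.mem_univ (z + v, T (z + v)))
        simpa [Prod.norm_def] using this
      rw [smul_eq_mul, h1, Real.norm_eq_abs, abs_mul, abs_of_pos hε]
      have hδ0 : 0 ≤ δ := (abs_nonneg _).trans (hTδ z)
      have h4 : C₂ * (2 * δ) * |T (z + v) - T z - 0| ≤ C₂ * (2 * δ) * X := by
        rw [sub_zero]
        have : |T (z + v) - T z| ≤ X := hX z
        gcongr
      gcongr
      exact (abs_add_le _ _).trans (add_le_add h3 (h2.trans h4))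
    · calc K / ε * (ε * (C₁ * ‖v‖ + C₂ * (2 * δ) * X))
          = (K / ε * ε) * (C₁ * ‖v‖ + C₂ * (2 * δ) * X) := by ring
        _ = (K * C₂ * (2 * δ)) * X + K * C₁ * ‖v‖ := by rw [hcancel]; ring
        _ ≤ 1 / 2 * X + K * C₁ * ‖v‖ := by gcongr
        _ = X / 2 + K * C₁ * ‖v‖ := by ring
  let a : (Fin n → ℝ) → ℝ := fun z => 1 + ε * fderiv ℝ G (z, T z) (0, 1)
  let b : (Fin n → ℝ) → ((Fin n → ℝ) →L[ℝ] ℝ) := fun z =>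
    ε • (fderiv ℝ G (z, T z)).comp (ContinuousLinearMap.inl ℝ (Fin n → ℝ) ℝ)
  have hap : Per a := fun σ k => by simp only [a, hTp σ k, hdGp]
  have hbp : Per b := fun σ k => by simp only [b, hTp σ k, hdGp]
  have hak : ∀ k : ℕ, ContDiff ℝ k T → ContDiff ℝ k a := fun k hk =>
    contDiff_const.add (contDiff_const.mul (((hdG.of_le (by exact_mod_cast le_top)).comp
      (contDiff_id.prodMk hk)).clm_apply contDiff_const))
  have hbk : ∀ k : ℕ, ContDiff ℝ k T → ContDiff ℝ k b := fun k hk =>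
    ContDiff.const_smul ε (((hdG.of_le (by exact_mod_cast le_top)).comp
      (contDiff_id.prodMk hk)).clm_comp contDiff_const)
  have hT0 : ContDiff ℝ (0 : ℕ) T := by rw [Nat.cast_zero, contDiff_zero]; exact hT
  obtain ⟨X, hX0, hX⟩ := hbp.bounded (hbk 0 hT0).continuous
  obtain ⟨q, hq, hqb, hqe⟩ := hs.2 _ b X (hbk 0 hT0).continuous hX
  have hder : ∀ z, HasFDerivAt T (q z) z := by
    refine hasFDerivAt_of_solvable (by positivity) hs T q ⟨δ, hTδ⟩ hqb fun e he0 => ?_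
    set L : ℝ := 1 + 2 * (K * C₁) with hL
    have hL1 : 1 ≤ L := by rw [hL]; nlinarith [mul_nonneg hK.le hC₁0]
    have hL0 : 0 < L := by linarith
    refine ⟨e / (ε * C₂ * L ^ 2 + 1), by positivity, fun z v hv => ?_⟩
    rw [lt_div_iff₀ (by positivity)] at hv
    set D := T (z + v) - T z with hD
    have hDv : ‖((z + v, T (z + v)) : (Fin n → ℝ) × ℝ) - (z, T z)‖ ≤ L * ‖v‖ := by
      rw [Prod.mk_sub_mk, Prod.norm_def, add_sub_cancel_left]
      refine max_le (by nlinarith [norm_nonneg v]) ?_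
      refine (hlip v z).trans ?_
      rw [hL]
      nlinarith [norm_nonneg v]
    have h1 := taylor_bound hG hC₂ hC0 (z, T z) (z, T z) (z + v, T (z + v)) (L * ‖v‖)
      (by simp; positivity) hDv
    have h2 : fderiv ℝ G (z, T z) ((z + v, T (z + v)) - (z, T z)) =
        fderiv ℝ G (z, T z) (v, 0) + D * fderiv ℝ G (z, T z) (0, 1) := by
      have h3 : ((z + v, T (z + v)) : (Fin n → ℝ) × ℝ) - (z, T z) = (v, 0) + D • (0, 1) := by
        ext <;> simp [hD]
      rw [h3, map_add, map_smul, smul_eq_mul]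
    have h4 : T (z + ω + v) - T (z + ω) - q (z + ω) v -
        (1 + ε * fderiv ℝ G (z, T z) (0, 1)) • (T (z + v) - T z - q z v) =
        ε * (G (z + v, T (z + v)) - G (z, T z) -
          fderiv ℝ G (z, T z) ((z + v, T (z + v)) - (z, T z))) := by
      rw [h2, add_right_comm z ω v, he, he, hqe]
      simp only [b, add_apply, smul_apply, smul_eq_mul, ContinuousLinearMap.comp_apply,
        ContinuousLinearMap.inl_apply, hD]
      ring
    rw [h4, Real.norm_eq_abs, abs_mul, abs_of_pos hε]
    calc ε * |_| ≤ ε * (C₂ * (L * ‖v‖) * (L * ‖v‖)) := by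
          gcongr
          exact h1.trans (by gcongr)
      _ = (‖v‖ * (ε * C₂ * L ^ 2)) * ‖v‖ := by ring
      _ ≤ e * ‖v‖ := by
          gcongr
          nlinarith [norm_nonneg v]
  have hfd : fderiv ℝ T = q := funext fun z => (hder z).fderiv
  induction m with
  | zero => exact hT0
  | succ k ih =>
    rw [Nat.cast_succ, contDiff_succ_iff_fderiv]
    refine ⟨fun z => (hder z).differentiableAt, fun h => absurd h (by simp), ?_⟩
    rw [hfd]
    exact contDiff_solution (by positivity) hs hap k (hak k ih) _ b q (hbk k ih) hbp hqb hqe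

/-- Smooth invariant graphs near small approximately invariant ones, for a skew product
`(z, t) ↦ (z + ω, t + ε G (z, t))` whose fibre derivative at `t = 0` is cohomologous to a function
close to a nonzero constant `B`. -/
lemma invariant_graph (hG : ContDiff ℝ (⊤ : ℕ∞) G)
    (hGp : ∀ z t (k : Fin n → ℤ), G (z + fun i => (k i : ℝ), t) = G (z, t))
    (hC₁ : ∀ p, ‖fderiv ℝ G p‖ ≤ C₁)
    (hC₂ : ∀ p q, ‖fderiv ℝ G p - fderiv ℝ G q‖ ≤ C₂ * ‖p - q‖) (hC0 : 0 ≤ C₂)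
    (φ : (Fin n → ℝ) → ℝ) (hφ : Continuous φ) (Φ : ℝ) (hΦ : ∀ z, |φ z| ≤ Φ) (B : ℝ) (hB : B ≠ 0)
    (hcoh : ∀ z, |fderiv ℝ G (z, 0) (0, 1) + φ z - φ (z + ω) - B| ≤ |B| / 4) :
    ∃ ε₁ : ℝ, 0 < ε₁ ∧ ∃ K : ℝ, 0 < K ∧ ∃ δ : ℝ, 0 < δ ∧
      ∀ ε, 0 < ε → ε < ε₁ → ∀ S : (Fin n → ℝ) → ℝ, Continuous S → Per S → (∀ z, |S z| ≤ δ) →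
      ∀ ρ, 0 ≤ ρ → 2 * K / ε * ρ ≤ δ → (∀ z, |S z + ε * G (z, S z) - S (z + ω)| ≤ ρ) →
      ∃ T : (Fin n → ℝ) → ℝ, (∀ m : ℕ, ContDiff ℝ m T) ∧ Per T ∧
        (∀ z, T (z + ω) = T z + ε * G (z, T z)) ∧ ∀ z, |T z - S z| ≤ 2 * K / ε * ρ := by
  have hC₁0 : 0 ≤ C₁ := (norm_nonneg _).trans (hC₁ 0)
  have hBpos : 0 < |B| := abs_pos.2 hB
  have hdG : Continuous (fderiv ℝ G) := hG.continuous_fderiv (by simp)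
  obtain ⟨ε₁, hε₁, K, hK, hsolv⟩ := solvable_eps ω φ hφ Φ C₁ (|B| / 2) hΦ hC₁0 (by positivity)
  have hn1 : ‖((0, 1) : (Fin n → ℝ) × ℝ)‖ = 1 := by simp [Prod.norm_def]
  have hτ : ∀ ε, 0 < ε → ε < ε₁ → ∀ τ : (Fin n → ℝ) → ℝ, Continuous τ →
      (∀ z, C₂ * |τ z| ≤ |B| / 4) →
      Solvable ω (fun z => 1 + ε * fderiv ℝ G (z, τ z) (0, 1)) (K / ε) := by
    intro ε hε hε1 τ hτ hτb
    refine hsolv ε hε hε1 (fun z => fderiv ℝ G (z, τ z) (0, 1))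
      ((hdG.comp (continuous_id.prodMk hτ)).clm_apply continuous_const) (fun z => ?_) ?_
    · calc _ ≤ ‖fderiv ℝ G (z, τ z)‖ * ‖((0, 1) : (Fin n → ℝ) × ℝ)‖ :=
            (fderiv ℝ G (z, τ z)).le_opNorm _
        _ ≤ C₁ := by rw [hn1, mul_one]; exact hC₁ _
    · have hclose : ∀ z, |fderiv ℝ G (z, τ z) (0, 1) - fderiv ℝ G (z, 0) (0, 1)| ≤ |B| / 4 := by
        intro z
        calc |fderiv ℝ G (z, τ z) (0, 1) - fderiv ℝ G (z, 0) (0, 1)|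
            = ‖(fderiv ℝ G (z, τ z) - fderiv ℝ G (z, 0)) (0, 1)‖ := rfl
          _ ≤ ‖fderiv ℝ G (z, τ z) - fderiv ℝ G (z, 0)‖ * ‖((0, 1) : (Fin n → ℝ) × ℝ)‖ :=
              ContinuousLinearMap.le_opNorm _ _
          _ ≤ C₂ * |τ z| := by
              rw [hn1, mul_one]
              refine (hC₂ _ _).trans (le_of_eq ?_)
              simp [Prod.norm_def]
          _ ≤ |B| / 4 := hτb z
      rcases lt_or_gt_of_ne hB with h | h
      · left
        intro z
        have h1 := (abs_le.1 (hclose z)).2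
        have h2 := (abs_le.1 (hcoh z)).2
        rw [abs_of_neg h] at *
        linarith
      · right
        intro z
        have h1 := (abs_le.1 (hclose z)).1
        have h2 := (abs_le.1 (hcoh z)).1
        rw [abs_of_pos h] at *
        linarith
  have hex : ∃ δ : ℝ, 0 < δ ∧ C₂ * (2 * δ) ≤ |B| / 4 ∧ K * C₂ * (2 * (2 * δ)) ≤ 1 / 2 := by
    refine ⟨min (|B| / (8 * (C₂ + 1))) (1 / (8 * (K * C₂ + 1))), by positivity, ?_, ?_⟩
    · have h1 : min (|B| / (8 * (C₂ + 1))) (1 / (8 * (K * C₂ + 1))) ≤ |B| / (8 * (C₂ + 1)) :=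
        min_le_left _ _
      generalize min (|B| / (8 * (C₂ + 1))) (1 / (8 * (K * C₂ + 1))) = x at h1
      rw [le_div_iff₀ (by positivity)] at h1
      rcases le_or_gt 0 x with hx | hx <;> nlinarith
    · have h1 : min (|B| / (8 * (C₂ + 1))) (1 / (8 * (K * C₂ + 1))) ≤ 1 / (8 * (K * C₂ + 1)) :=
        min_le_right _ _
      generalize min (|B| / (8 * (C₂ + 1))) (1 / (8 * (K * C₂ + 1))) = x at h1
      rw [le_div_iff₀ (by positivity)] at h1
      have : 0 ≤ K * C₂ := by positivity
      rcases le_or_gt 0 x with hx | hx <;> nlinarith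
  obtain ⟨δ, hδ, hδ1, hδ2⟩ := hex
  have hKC : 0 ≤ K * C₂ := by positivity
  refine ⟨ε₁, hε₁, K, hK, δ, hδ, fun ε hε hε1 S hS hSp hSδ ρ hρ hρδ hres => ?_⟩
  obtain ⟨T, hT, hTp, hTe, hTS⟩ := exists_invariant_graph hG hGp hC₂ hC0 hε hK hS hSp
    (hτ ε hε hε1 S hS fun z => by nlinarith [hSδ z]) rfl hρ (by nlinarith) hres
  have hTδ : ∀ z, |T z| ≤ 2 * δ := fun z => by
    have h1 : |T z| ≤ |T z - S z| + |S z| := by simpa using abs_add_le (T z - S z) (S z)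
    linarith [hTS z, hSδ z]
  exact ⟨T, contDiff_invariant_graph hG hGp hC₁ hC₂ hC0 hε hK hT hTp
    (hτ ε hε hε1 T hT fun z => by nlinarith [hTδ z]) hTδ hδ2 hTe, hTp, hTe, hTS⟩

end Skew

/-! ### Averages of periodic functions -/

section Weyl

variable {n : ℕ}

/-- A directional derivative of a periodic function has zero mean (divergence theorem: opposite
faces of the unit cube cancel). -/
lemma integral_fderiv_eq_zero {W : Type} [NormedAddCommGroup W] [NormedSpace ℝ W]
    [CompleteSpace W] {h : (Fin n → ℝ) → W} (hh : ContDiff ℝ 1 h) (hp : Per h)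
    (v : Fin n → ℝ) :
    ∫ z in Set.Icc (0 : Fin n → ℝ) 1, fderiv ℝ h z v = 0 := by
  rcases n with _ | m
  · have : v = 0 := Subsingleton.elim _ _
    simp only [this, map_zero, integral_zero]
  have hsum : ∀ z, fderiv ℝ h z v
      = ∑ i, (v i • fderiv ℝ h z) (Pi.single i 1) := by
    intro z
    conv_lhs => rw [pi_eq_sum_univ' v]
    rw [map_sum]
    refine Finset.sum_congr rfl fun i _ => ?_
    rw [map_smul]
    rfl
  have hcont : Continuous fun z => fderiv ℝ h z v :=
    (hh.continuous_fderiv one_ne_zero).clm_apply continuous_const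
  have key := integral_divergence_of_hasFDerivAt_off_countable' (E := W) (n := m) 0 1
    (zero_le_one) (fun i z => v i • h z) (fun i z => v i • fderiv ℝ h z) ∅
    Set.countable_empty
    (fun i => (continuous_const.smul hh.continuous).continuousOn)
    (fun x _ i => ((hh.differentiable one_ne_zero x).hasFDerivAt).const_smul (v i))
    (by
      simp only [← hsum]
      exact hcont.continuousOn.integrableOn_compact isCompact_Icc)
  simp only [← hsum] at key
  rw [key]
  refine Finset.sum_eq_zero fun i _ => ?_
  rw [sub_eq_zero]
  congr 1
  ext x
  congr 1
  refine Eq.trans ?_ (hp _ (Pi.single i 1))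
  congr 1
  ext j
  rcases eq_or_ne j i with rfl | hj
  · simp
  · obtain ⟨j', rfl⟩ := Fin.exists_succAbove_eq hj
    simp

/-- Uniform convergence of the Birkhoff averages of `f` along the translation by `ω` to the mean
of `f` over the unit cube. -/
def Equidistributes (ω : Fin n → ℝ) (f : (Fin n → ℝ) → ℂ) : Prop :=
  ∀ e : ℝ, 0 < e → ∃ N₀ : ℕ, ∀ N : ℕ, N₀ ≤ N → ∀ z,
    ‖∑ j ∈ Finset.range N, f (z + (j : ℝ) • ω)
      - (N : ℂ) * ∫ x in Set.Icc (0 : Fin n → ℝ) 1, f x‖ ≤ e * N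

lemma volume_cube : (volume (Set.Icc (0 : Fin n → ℝ) 1)).toReal = 1 := by
  rw [Real.volume_Icc_pi]; simp

lemma Equidistributes.add {ω : Fin n → ℝ} {f g : (Fin n → ℝ) → ℂ} (hf : Equidistributes ω f)
    (hg : Equidistributes ω g) (cf : Continuous f) (cg : Continuous g) :
    Equidistributes ω (fun z => f z + g z) := by
  intro e he
  obtain ⟨N₁, h₁⟩ := hf (e / 2) (by positivity)
  obtain ⟨N₂, h₂⟩ := hg (e / 2) (by positivity)
  refine ⟨max N₁ N₂, fun N hN z => ?_⟩
  rw [integral_add (cf.continuousOn.integrableOn_compact isCompact_Icc)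
    (cg.continuousOn.integrableOn_compact isCompact_Icc), Finset.sum_add_distrib, mul_add,
    add_sub_add_comm]
  refine (norm_add_le _ _).trans ?_
  have a₁ := h₁ N ((le_max_left _ _).trans hN) z
  have a₂ := h₂ N ((le_max_right _ _).trans hN) z
  linarith

lemma Equidistributes.const_mul {ω : Fin n → ℝ} {f : (Fin n → ℝ) → ℂ}
    (hf : Equidistributes ω f) (c : ℂ) : Equidistributes ω (fun z => c * f z) := by
  intro e he
  obtain ⟨N₁, h₁⟩ := hf (e / (‖c‖ + 1)) (by positivity)
  refine ⟨N₁, fun N hN z => ?_⟩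
  rw [integral_const_mul, ← Finset.mul_sum, mul_left_comm, ← mul_sub, norm_mul]
  have a := h₁ N hN z
  calc ‖c‖ * _ ≤ (‖c‖ + 1) * (e / (‖c‖ + 1) * N) := by gcongr; linarith
    _ = e * N := by field_simp

lemma Equidistributes.of_approx {ω : Fin n → ℝ} {f : (Fin n → ℝ) → ℂ} (cf : Continuous f)
    (h : ∀ e : ℝ, 0 < e → ∃ g : (Fin n → ℝ) → ℂ, Continuous g ∧ Equidistributes ω g ∧
      ∀ z, ‖f z - g z‖ ≤ e) : Equidistributes ω f := by
  intro e he
  obtain ⟨g, cg, hg, hfg⟩ := h (e / 3) (by positivity)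
  obtain ⟨N₁, h₁⟩ := hg (e / 3) (by positivity)
  refine ⟨N₁, fun N hN z => ?_⟩
  have a₁ := h₁ N hN z
  have a₂ : ‖∑ j ∈ Finset.range N, (f (z + (j : ℝ) • ω) - g (z + (j : ℝ) • ω))‖ ≤ e / 3 * N := by
    refine (norm_sum_le_of_le _ fun j _ => hfg _).trans ?_
    simp [mul_comm]
  have a₃ : ‖(∫ x in Set.Icc (0 : Fin n → ℝ) 1, f x) - ∫ x in Set.Icc (0 : Fin n → ℝ) 1, g x‖
      ≤ e / 3 := by
    rw [← integral_sub (cf.continuousOn.integrableOn_compact isCompact_Icc)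
      (cg.continuousOn.integrableOn_compact isCompact_Icc)]
    refine (norm_setIntegral_le_of_norm_le_const (by rw [Real.volume_Icc_pi]; simp)
      fun x _ => hfg x).trans ?_
    rw [measureReal_def, volume_cube, mul_one]
  rw [Finset.sum_sub_distrib] at a₂
  set A := ∑ j ∈ Finset.range N, f (z + (j : ℝ) • ω)
  set B := ∑ j ∈ Finset.range N, g (z + (j : ℝ) • ω)
  set I := ∫ x in Set.Icc (0 : Fin n → ℝ) 1, f x
  set J := ∫ x in Set.Icc (0 : Fin n → ℝ) 1, g x
  have : A - N * I = (A - B) + (B - N * J) - N * (I - J) := by ring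
  rw [this]
  have a₄ : ‖(N : ℂ) * (I - J)‖ ≤ N * (e / 3) := by
    rw [norm_mul, Complex.norm_natCast]; gcongr
  refine (norm_sub_le _ _).trans ?_
  have := norm_add_le (A - B) (B - N * J)
  linarith

/-- Characters equidistribute: a nontrivial one has zero mean, and its orbit sums are geometric
sums of ratio `exp (2πi k·ω) ≠ 1`. -/
lemma equidistributes_character {ω : Fin n → ℝ}
    (hω : ∀ k : Fin n → ℤ, k ≠ 0 → ∀ m : ℤ, ∑ i, (k i : ℝ) * ω i ≠ m) (k : Fin n → ℤ) :
    Equidistributes ω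
      (fun z => Complex.exp (2 * Real.pi * Complex.I * ((∑ i, (k i : ℝ) * z i : ℝ) : ℂ))) := by
  by_cases hk : k = 0
  · intro e he
    refine ⟨0, fun N _ z => ?_⟩
    subst hk
    have hv : (volume : Measure (Fin n → ℝ)).real (Set.Icc 0 1) = 1 := volume_cube
    simp [hv]
    positivity
  set χ : (Fin n → ℝ) → ℂ :=
    fun z => Complex.exp (2 * Real.pi * Complex.I * ((∑ i, (k i : ℝ) * z i : ℝ) : ℂ)) with hχ
  have hnorm : ∀ z, ‖χ z‖ = 1 := by
    intro z
    have := Complex.norm_exp_ofReal_mul_I (2 * Real.pi * (∑ i, (k i : ℝ) * z i))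
    rw [← this, hχ]
    congr 2
    push_cast; ring_nf
  set lin : (Fin n → ℝ) →L[ℝ] ℝ := ∑ i, (k i : ℝ) • ContinuousLinearMap.proj i with hlin
  have hlinv : ∀ z, lin z = ∑ i, (k i : ℝ) * z i := by
    intro z; simp [hlin]
  have hχl : χ = fun z => Complex.exp (2 * Real.pi * Complex.I * ((lin z : ℝ) : ℂ)) := by
    ext z; rw [hlinv]
  have hper : Per χ := by
    intro z m
    rw [hχl]
    simp only [map_add, Complex.ofReal_add, mul_add, Complex.exp_add]
    have : Complex.exp (2 * Real.pi * Complex.I * ((lin (fun i => (m i : ℝ)) : ℝ) : ℂ)) = 1 := by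
      rw [Complex.exp_eq_one_iff]
      refine ⟨∑ i, k i * m i, ?_⟩
      rw [hlinv]; push_cast; ring
    rw [this, mul_one]
  have hd : ∀ z, HasFDerivAt χ (χ z • ((2 * Real.pi * Complex.I) •
      (Complex.ofRealCLM.comp lin))) z := by
    intro z
    rw [hχl]
    exact (((Complex.ofRealCLM.comp lin).hasFDerivAt).const_mul (2 * Real.pi * Complex.I)).cexp
  have hcd : ContDiff ℝ 1 χ := by
    rw [hχl]
    exact Complex.contDiff_exp.comp (contDiff_const.mul (Complex.ofRealCLM.comp lin).contDiff)
  have hmean0 : ∫ x in Set.Icc (0 : Fin n → ℝ) 1, χ x = 0 := by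
    have h := integral_fderiv_eq_zero hcd hper (fun i => (k i : ℝ))
    have hlk : lin (fun i => (k i : ℝ)) ≠ 0 := by
      rw [hlinv]
      intro h0
      apply hk
      rw [Finset.sum_eq_zero_iff_of_nonneg (fun i _ => mul_self_nonneg _)] at h0
      ext i
      have := h0 i (Finset.mem_univ i)
      exact_mod_cast mul_self_eq_zero.1 this
    have h2 : ∀ z, fderiv ℝ χ z (fun i => (k i : ℝ))
        = χ z * (2 * Real.pi * Complex.I * (lin (fun i => (k i : ℝ)) : ℂ)) := by
      intro z; rw [(hd z).fderiv]; rfl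
    simp only [h2] at h
    rw [integral_mul_const] at h
    refine (mul_eq_zero.1 h).resolve_right ?_
    simp [hlk, Real.pi_ne_zero]
  set μ : ℂ := χ ω with hμ
  have hμ1 : μ ≠ 1 := by
    rw [hμ, hχ]
    simp only [ne_eq, Complex.exp_eq_one_iff, not_exists]
    intro m hm
    apply hω k hk m
    have h2 : (2 * Real.pi * Complex.I : ℂ) * ((∑ i, (k i : ℝ) * ω i : ℝ) : ℂ)
        = (2 * Real.pi * Complex.I) * ((m : ℝ) : ℂ) := by rw [hm]; push_cast; ring
    exact_mod_cast mul_left_cancel₀ Complex.two_pi_I_ne_zero h2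
  have hstep : ∀ z (j : ℕ), χ (z + (j : ℝ) • ω) = χ z * μ ^ j := by
    intro z j
    rw [hμ, hχl]
    simp only [← Complex.exp_nat_mul, ← Complex.exp_add]
    congr 1
    simp only [map_add, map_smul, smul_eq_mul]
    push_cast; ring
  intro e he
  have hpos : 0 < ‖μ - 1‖ := norm_pos_iff.2 (sub_ne_zero.2 hμ1)
  obtain ⟨N₀, hN₀⟩ := exists_nat_ge (2 / ‖μ - 1‖ / e)
  refine ⟨N₀, fun N hN z => ?_⟩
  rw [hmean0, mul_zero, sub_zero]
  simp only [hstep]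
  rw [← Finset.mul_sum, geom_sum_eq hμ1, norm_mul, hnorm, one_mul, norm_div]
  have h1 : ‖μ ^ N - 1‖ ≤ 2 := by
    refine (norm_sub_le _ _).trans ?_
    rw [norm_pow, hμ, hnorm]; norm_num
  calc ‖μ ^ N - 1‖ / ‖μ - 1‖ ≤ 2 / ‖μ - 1‖ := by gcongr
    _ = e * (2 / ‖μ - 1‖ / e) := by field_simp
    _ ≤ e * N := by
        have : (N₀ : ℝ) ≤ N := by exact_mod_cast hN
        gcongr; linarith

/-- Weyl's equidistribution theorem for a nonresonant translation of the torus: trigonometric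
polynomials are uniformly dense in the continuous periodic functions. -/
lemma equidistributes_of_continuous {ω : Fin n → ℝ}
    (hω : ∀ k : Fin n → ℤ, k ≠ 0 → ∀ m : ℤ, ∑ i, (k i : ℝ) * ω i ≠ m)
    {f : (Fin n → ℝ) → ℂ} (cf : Continuous f) (hp : Per f) : Equidistributes ω f := by
  set π : (Fin n → ℝ) → UnitAddTorus (Fin n) := Pi.map fun _ => ((↑) : ℝ → UnitAddCircle) with hπ
  have hπq : IsOpenQuotientMap π :=
    IsOpenQuotientMap.piMap fun _ => QuotientAddGroup.isOpenQuotientMap_mk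
  obtain ⟨s, hs⟩ := hπq.surjective.hasRightInverse
  have hfs : (f ∘ s) ∘ π = f := by
    ext z
    have h1 : π (s (π z)) = π z := hs _
    have h2 : ∀ i, ∃ m : ℤ, s (π z) i = z i + m := by
      intro i
      have := congrFun h1 i
      simp only [hπ, Pi.map_apply] at this
      obtain ⟨m, hm⟩ := AddSubgroup.mem_zmultiples_iff.1 (QuotientAddGroup.eq_iff_sub_mem.1 this)
      exact ⟨m, by simp at hm; linarith⟩
    choose m hm using h2
    have h3 : s (π z) = z + fun i => (m i : ℝ) := funext hm
    simp only [Function.comp_apply, h3, hp z m]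
  set Fc : C(UnitAddTorus (Fin n), ℂ) := ⟨f ∘ s, by
    rw [← hπq.continuous_comp_iff, hfs]; exact cf⟩ with hFc
  have hspan : ∀ h ∈ Submodule.span ℂ (Set.range (UnitAddTorus.mFourier (d := Fin n))),
      Equidistributes ω (h ∘ π) := by
    intro h hh
    induction hh using Submodule.span_induction with
    | mem x hx =>
      obtain ⟨k, rfl⟩ := hx
      convert equidistributes_character hω k using 1
      ext z
      simp only [Function.comp_apply, UnitAddTorus.mFourier, ContinuousMap.coe_mk, hπ,
        Pi.map_apply, fourier_coe_apply]
      rw [← Complex.exp_sum]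
      congr 1
      push_cast
      rw [Finset.mul_sum]
      refine Finset.sum_congr rfl fun i _ => ?_
      ring
    | zero =>
      have := (equidistributes_character hω 0).const_mul 0
      simpa [Function.comp_def] using this
    | add x y _ _ hx hy =>
      exact hx.add hy (x.continuous.comp hπq.continuous) (y.continuous.comp hπq.continuous)
    | smul a x _ hx => exact hx.const_mul a
  refine Equidistributes.of_approx cf fun e he => ?_
  have hmem : Fc ∈ closure (Submodule.span ℂ (Set.range (UnitAddTorus.mFourier (d := Fin n))) :
      Set C(UnitAddTorus (Fin n), ℂ)) := by
    rw [← Submodule.topologicalClosure_coe, UnitAddTorus.span_mFourier_closure_eq_top]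
    trivial
  obtain ⟨h, hh, hd⟩ := Metric.mem_closure_iff.1 hmem e he
  refine ⟨h ∘ π, h.continuous.comp hπq.continuous, hspan h hh, fun z => ?_⟩
  rw [← hfs, ← dist_eq_norm]
  exact (ContinuousMap.dist_apply_le_dist (f := Fc) (g := h) (π z)).trans hd.le

/-- The Birkhoff averages of a continuous periodic function approach its mean uniformly. -/
lemma birkhoff_average {ω : Fin n → ℝ}
    (hω : ∀ k : Fin n → ℤ, k ≠ 0 → ∀ m : ℤ, ∑ i, (k i : ℝ) * ω i ≠ m)
    {f : (Fin n → ℝ) → ℝ} (cf : Continuous f) (hp : Per f) (e : ℝ) (he : 0 < e) :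
    ∃ N : ℕ, 0 < N ∧ ∀ z, |(∑ j ∈ Finset.range N, f (z + (j : ℝ) • ω)) / N
      - ∫ x in Set.Icc (0 : Fin n → ℝ) 1, f x| ≤ e := by
  obtain ⟨N₀, h⟩ := equidistributes_of_continuous hω (f := fun z => (f z : ℂ))
    (Complex.continuous_ofReal.comp cf) (fun σ k => by simp only [hp σ k]) e he
  refine ⟨N₀ + 1, Nat.succ_pos _, fun z => ?_⟩
  have h1 := h (N₀ + 1) (Nat.le_succ _) z
  rw [integral_complex_ofReal] at h1
  have hN : (0 : ℝ) < ((N₀ + 1 : ℕ) : ℝ) := by positivity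
  rw [← mul_le_mul_iff_left₀ hN]
  refine le_trans (le_of_eq ?_) h1
  rw [← Complex.ofReal_sum, ← Complex.ofReal_natCast, ← Complex.ofReal_mul, ← Complex.ofReal_sub,
    Complex.norm_real, Real.norm_eq_abs]
  conv_lhs => rw [← abs_of_pos hN, ← abs_mul, abs_of_pos hN]
  congr 1
  field_simp

/-- Unique ergodicity: continuous invariant functions are constant. -/
lemma const_of_invariant {ω : Fin n → ℝ}
    (hω : ∀ k : Fin n → ℤ, k ≠ 0 → ∀ m : ℤ, ∑ i, (k i : ℝ) * ω i ≠ m)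
    {f : (Fin n → ℝ) → ℝ} (cf : Continuous f) (hp : Per f) (hi : ∀ z, f (z + ω) = f z)
    (z : Fin n → ℝ) : f z = f 0 := by
  have hj : ∀ (j : ℕ) z, f (z + (j : ℝ) • ω) = f z := by
    intro j
    induction j with
    | zero => simp
    | succ j ih =>
      intro z
      rw [← ih z, ← hi (z + (j : ℝ) • ω)]
      congr 1
      push_cast
      rw [add_smul, one_smul, add_assoc]
  have hall : ∀ e, 0 < e → |f z - f 0| ≤ e := by
    intro e he
    obtain ⟨N, hN, h⟩ := birkhoff_average hω cf hp (e / 2) (by positivity)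
    have hN' : (N : ℝ) ≠ 0 := by positivity
    have h1 : ∀ z, |f z - ∫ x in Set.Icc (0 : Fin n → ℝ) 1, f x| ≤ e / 2 := by
      intro z
      have := h z
      simp only [hj, Finset.sum_const, Finset.card_range, nsmul_eq_mul] at this
      rwa [mul_div_cancel_left₀ _ hN'] at this
    have a := abs_le.1 (h1 z)
    have b := abs_le.1 (h1 0)
    rw [abs_le]; constructor <;> linarith [a.1, a.2, b.1, b.2]
  have : |f z - f 0| ≤ 0 := le_of_forall_pos_le_add fun e he => by simpa using hall e he
  exact sub_eq_zero.1 (abs_eq_zero.1 (le_antisymm this (abs_nonneg _)))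

/-- The cohomological normalisation: up to a coboundary, a function is close to its mean. -/
lemma exists_coboundary {ω : Fin n → ℝ}
    (hω : ∀ k : Fin n → ℤ, k ≠ 0 → ∀ m : ℤ, ∑ i, (k i : ℝ) * ω i ≠ m)
    {f : (Fin n → ℝ) → ℝ} (cf : Continuous f) (hp : Per f) (e : ℝ) (he : 0 < e) :
    ∃ φ : (Fin n → ℝ) → ℝ, Continuous φ ∧ (∃ Φ, ∀ z, |φ z| ≤ Φ) ∧
      ∀ z, |f z + φ z - φ (z + ω) - ∫ x in Set.Icc (0 : Fin n → ℝ) 1, f x| ≤ e := by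
  obtain ⟨N, hN, h⟩ := birkhoff_average hω cf hp e he
  have hN' : (N : ℝ) ≠ 0 := by positivity
  set φ : (Fin n → ℝ) → ℝ := fun z =>
    -((∑ k ∈ Finset.range N, ∑ j ∈ Finset.range k, f (z + (j : ℝ) • ω)) / N) with hφ
  have cφ : Continuous φ := by
    rw [hφ]; fun_prop
  have pφ : Per φ := by
    intro σ k
    simp only [hφ]
    have : ∀ b : ℕ, f ((σ + fun i => (k i : ℝ)) + (b : ℝ) • ω) = f (σ + (b : ℝ) • ω) := by
      intro b
      rw [add_right_comm, hp]
    simp only [this]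
  obtain ⟨Φ, _, hΦ⟩ := pφ.bounded cφ
  refine ⟨φ, cφ, ⟨Φ, hΦ⟩, fun z => ?_⟩
  convert h z using 3
  have hk : ∀ k : ℕ, ∑ j ∈ Finset.range k, f (z + ω + (j : ℝ) • ω)
      = ∑ j ∈ Finset.range k, f (z + (j : ℝ) • ω) + f (z + (k : ℝ) • ω) - f z := by
    intro k
    induction k with
    | zero => simp
    | succ k ih =>
      rw [Finset.sum_range_succ, ih, Finset.sum_range_succ]
      have : z + ω + (k : ℝ) • ω = z + ((k + 1 : ℕ) : ℝ) • ω := by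
        push_cast; rw [add_smul, one_smul]; abel
      rw [this]; ring
  simp only [hφ, hk, Finset.sum_add_distrib, Finset.sum_sub_distrib, Finset.sum_const,
    Finset.card_range, nsmul_eq_mul]
  field_simp
  ring

end Weyl

/-! ### The skew product over the rotation -/

section Skew

variable {n : ℕ}

/-- A continuous function on `ℝⁿ × ℝ` which is `ℤⁿ × ℤ`-periodic is bounded. -/
lemma bounded_of_biperiodic {W : Type} [NormedAddCommGroup W] {h : (Fin n → ℝ) × ℝ → W}
    (hc : Continuous h)
    (hp : ∀ (x : Fin n → ℝ) (y : ℝ) (k : Fin n → ℤ) (m : ℤ),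
      h (x + fun i => (k i : ℝ), y + (m : ℝ)) = h (x, y)) :
    ∃ X, 0 ≤ X ∧ ∀ p, ‖h p‖ ≤ X := by
  obtain ⟨X, hX⟩ := ((isCompact_Icc (a := (0 : Fin n → ℝ)) (b := 1)).prod
    (isCompact_Icc (a := (0 : ℝ)) (b := 1))).exists_bound_of_continuousOn hc.continuousOn
  refine ⟨max X 0, le_max_right _ _, fun p => ?_⟩
  obtain ⟨k, hk⟩ := exists_int_translate p.1
  have h1 := hp p.1 p.2 k (-⌊p.2⌋)
  rw [Prod.mk.eta] at h1
  rw [← h1]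
  refine (hX _ ⟨hk, ?_, ?_⟩).trans (le_max_left _ _)
  · push_cast
    linarith [Int.floor_le p.2]
  · push_cast
    linarith [Int.lt_floor_add_one p.2]

lemma fderiv_biperiodic {W : Type} [NormedAddCommGroup W] [NormedSpace ℝ W]
    {h : (Fin n → ℝ) × ℝ → W}
    (hp : ∀ (x : Fin n → ℝ) (y : ℝ) (k : Fin n → ℤ) (m : ℤ),
      h (x + fun i => (k i : ℝ), y + (m : ℝ)) = h (x, y))
    (x : Fin n → ℝ) (y : ℝ) (k : Fin n → ℤ) (m : ℤ) :
    fderiv ℝ h (x + fun i => (k i : ℝ), y + (m : ℝ)) = fderiv ℝ h (x, y) := by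
  have h1 : (x + fun i => (k i : ℝ), y + (m : ℝ))
      = (x, y) + ((fun i => (k i : ℝ), (m : ℝ)) : (Fin n → ℝ) × ℝ) := rfl
  rw [h1, ← fderiv_comp_add_right]
  congr 1
  ext p
  exact hp p.1 p.2 k m

/-- The coordinates `(z, t) ↦ (z + t v, y₀ + t L)` adapted to the direction `(v, L)`. -/
def chart (v : Fin n → ℝ) (L y₀ : ℝ) (p : (Fin n → ℝ) × ℝ) : (Fin n → ℝ) × ℝ :=
  (p.1 + p.2 • v, y₀ + p.2 * L)

/-- `invariant_graph` for the fibre displacement `g` read in the coordinates `chart`. The fibre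
derivative of the displacement has mean `L ∫ ∂_y g(·, y₀)`, the contribution of the `x`-derivatives
being zero, so it is nonzero by nondegeneracy. -/
lemma invariant_graph_chart {ω : Fin n → ℝ}
    (hω : ∀ k : Fin n → ℤ, k ≠ 0 → ∀ m : ℤ, ∑ i, (k i : ℝ) * ω i ≠ m)
    {g : (Fin n → ℝ) × ℝ → ℝ} (hg : ContDiff ℝ (⊤ : ℕ∞) g)
    (hgper : ∀ (x : Fin n → ℝ) (y : ℝ) (k : Fin n → ℤ) (m : ℤ),
      g (x + fun i => (k i : ℝ), y + (m : ℝ)) = g (x, y))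
    (v : Fin n → ℝ) (L y₀ : ℝ) (hL : L ≠ 0)
    (hnd : (∫ σ in Set.Icc (0 : Fin n → ℝ) 1, deriv (fun y => g (σ, y)) y₀) ≠ 0) :
    ∃ ε₁ : ℝ, 0 < ε₁ ∧ ∃ K : ℝ, 0 < K ∧ ∃ δ : ℝ, 0 < δ ∧ ∀ ε, 0 < ε → ε < ε₁ →
      ∀ S : (Fin n → ℝ) → ℝ, Continuous S → Per S → (∀ z, |S z| ≤ δ) →
      ∀ ρ, 0 ≤ ρ → 2 * K / ε * ρ ≤ δ →
      (∀ z, |S z + ε * g (chart v L y₀ (z, S z)) - S (z + ω)| ≤ ρ) →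
      ∃ T : (Fin n → ℝ) → ℝ, (∀ m : ℕ, ContDiff ℝ m T) ∧ Per T ∧
        (∀ z, T (z + ω) = T z + ε * g (chart v L y₀ (z, T z))) ∧
        ∀ z, |T z - S z| ≤ 2 * K / ε * ρ := by
  set A : ((Fin n → ℝ) × ℝ) →L[ℝ] ((Fin n → ℝ) × ℝ) :=
    (ContinuousLinearMap.fst ℝ (Fin n → ℝ) ℝ
      + (ContinuousLinearMap.snd ℝ (Fin n → ℝ) ℝ).smulRight v).prod
    (L • ContinuousLinearMap.snd ℝ (Fin n → ℝ) ℝ) with hA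
  have hchart : chart v L y₀ = fun p => A p + (0, y₀) := by
    ext p
    · simp [chart, hA]
    · simp [chart, hA]; ring
  have hdc : ∀ p, HasFDerivAt (chart v L y₀) A p := by
    intro p
    rw [hchart]
    exact A.hasFDerivAt.add_const _
  have hgd : Differentiable ℝ g := hg.differentiable (by simp)
  have hg' : ContDiff ℝ 1 (fderiv ℝ g) :=
    (contDiff_infty.1 hg 2).fderiv_right (by norm_num)
  have hG : ∀ p, HasFDerivAt (fun p => g (chart v L y₀ p))
      ((fderiv ℝ g (chart v L y₀ p)).comp A) p :=
    fun p => (hgd _).hasFDerivAt.comp p (hdc p)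
  have hGf : ∀ p, fderiv ℝ (fun p => g (chart v L y₀ p)) p
      = (fderiv ℝ g (chart v L y₀ p)).comp A := fun p => (hG p).fderiv
  obtain ⟨X₁, hX₁0, hX₁⟩ := bounded_of_biperiodic hg'.continuous (fderiv_biperiodic hgper)
  obtain ⟨X₂, hX₂0, hX₂⟩ := bounded_of_biperiodic (hg'.continuous_fderiv one_ne_zero)
    (fderiv_biperiodic (fderiv_biperiodic hgper))
  have hlip : ∀ p q, ‖fderiv ℝ g p - fderiv ℝ g q‖ ≤ X₂ * ‖p - q‖ := fun p q =>
    (convex_univ (𝕜 := ℝ) (E := (Fin n → ℝ) × ℝ)).norm_image_sub_le_of_norm_fderiv_le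
      (fun x _ => hg'.differentiable one_ne_zero x) (fun x _ => hX₂ x) (Set.mem_univ q)
      (Set.mem_univ p)
  have hdy : ∀ σ, deriv (fun y => g (σ, y)) y₀ = fderiv ℝ g (σ, y₀) (0, 1) := by
    intro σ
    have h1 : HasDerivAt (fun y : ℝ => (σ, y)) ((0 : Fin n → ℝ), (1 : ℝ)) y₀ :=
      (hasDerivAt_const _ _).prodMk (hasDerivAt_id _)
    exact ((hgd (σ, y₀)).hasFDerivAt.comp_hasDerivAt y₀ h1).deriv
  have hdx : ∀ σ, fderiv ℝ (fun z => g (z, y₀)) σ v = fderiv ℝ g (σ, y₀) (v, 0) := by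
    intro σ
    have h1 : HasFDerivAt (fun z : Fin n → ℝ => (z, y₀))
        ((ContinuousLinearMap.id ℝ (Fin n → ℝ)).prod 0) σ :=
      (hasFDerivAt_id σ).prodMk (hasFDerivAt_const y₀ σ)
    have h2 : HasFDerivAt (fun z => g (z, y₀)) _ σ := (hgd (σ, y₀)).hasFDerivAt.comp σ h1
    rw [h2.fderiv]
    rfl
  have hα : ∀ z, fderiv ℝ (fun p => g (chart v L y₀ p)) (z, 0) (0, 1)
      = fderiv ℝ (fun z => g (z, y₀)) z v + L * deriv (fun y => g (z, y)) y₀ := by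
    intro z
    rw [hGf, hdy, hdx, ContinuousLinearMap.comp_apply, ← smul_eq_mul, ← map_smul, ← map_add]
    simp [hA, chart]
  have hgy : ContDiff ℝ 1 (fun z => g (z, y₀)) :=
    (hg.of_le (by exact_mod_cast le_top)).comp (contDiff_id.prodMk contDiff_const)
  have hgyper : Per (fun z => g (z, y₀)) := by
    intro σ k
    have := hgper σ y₀ k 0
    simpa using this
  have c1 : Continuous fun z => fderiv ℝ (fun z => g (z, y₀)) z v :=
    (hgy.continuous_fderiv one_ne_zero).clm_apply continuous_const
  have c2 : Continuous fun z => deriv (fun y => g (z, y)) y₀ := by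
    simp only [hdy]
    exact (hg'.continuous.comp (continuous_id.prodMk continuous_const)).clm_apply continuous_const
  have c3 : Continuous fun z => L * deriv (fun y => g (z, y)) y₀ := continuous_const.mul c2
  set B : ℝ := L * ∫ σ in Set.Icc (0 : Fin n → ℝ) 1, deriv (fun y => g (σ, y)) y₀ with hBdef
  have hB : B ≠ 0 := mul_ne_zero hL hnd
  have hmean : ∫ z in Set.Icc (0 : Fin n → ℝ) 1,
      fderiv ℝ (fun p => g (chart v L y₀ p)) (z, 0) (0, 1) = B := by
    simp only [hα]
    rw [integral_add (c1.continuousOn.integrableOn_compact isCompact_Icc)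
      (c3.continuousOn.integrableOn_compact isCompact_Icc),
      integral_fderiv_eq_zero hgy hgyper, zero_add, integral_const_mul]
  have hαc : Continuous fun z => fderiv ℝ (fun p => g (chart v L y₀ p)) (z, 0) (0, 1) := by
    simp only [hα]
    exact c1.add c3
  have hGper : ∀ (z : Fin n → ℝ) (t : ℝ) (k : Fin n → ℤ),
      g (chart v L y₀ (z + fun i => (k i : ℝ), t)) = g (chart v L y₀ (z, t)) := by
    intro z t k
    have := hgper (z + t • v) (y₀ + t * L) k 0
    simp only [chart]
    rw [add_right_comm]
    simpa using this
  have hαp : Per fun z => fderiv ℝ (fun p => g (chart v L y₀ p)) (z, 0) (0, 1) := by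
    intro z k
    simp only [hα]
    rw [hgyper.fderiv z k]
    congr 3
    ext y
    simpa using hgper z y k 0
  obtain ⟨φ, hφ, ⟨Φ, hΦ⟩, hcoh⟩ := exists_coboundary hω hαc hαp (|B| / 4) (by positivity)
  rw [hmean] at hcoh
  refine invariant_graph (ω := ω) (G := fun p => g (chart v L y₀ p)) (C₁ := X₁ * ‖A‖)
    (C₂ := X₂ * ‖A‖ * ‖A‖) ?_ hGper ?_ ?_ (by positivity) φ hφ Φ hΦ B hB hcoh
  · refine hg.comp ?_
    rw [hchart]
    exact A.contDiff.add contDiff_const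
  · intro p
    rw [hGf]
    exact (ContinuousLinearMap.opNorm_comp_le _ _).trans (by gcongr; exact hX₁ _)
  · intro p q
    rw [hGf, hGf, ← ContinuousLinearMap.sub_comp]
    refine (ContinuousLinearMap.opNorm_comp_le _ _).trans ?_
    have h1 : ‖chart v L y₀ p - chart v L y₀ q‖ ≤ ‖A‖ * ‖p - q‖ := by
      rw [hchart]
      simp only [add_sub_add_right_eq_sub]
      rw [← map_sub]
      exact A.le_opNorm _
    have h2 := hlip (chart v L y₀ p) (chart v L y₀ q)
    calc _ ≤ (X₂ * (‖A‖ * ‖p - q‖)) * ‖A‖ := by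
          gcongr
          exact h2.trans (by gcongr)
      _ = _ := by ring

end Skew

/-! ### Consequences of the Lindstedt equations -/

section Lindstedt

variable {n : ℕ}

/-- The Diophantine condition excludes resonances. -/
lemma nonresonant_of_diophantine {ν τ : ℝ} (hν : 0 < ν) {ω : Fin n → ℝ}
    (hdio : ∀ k : Fin n → ℤ, k ≠ 0 → ∀ m : ℤ,
      ν * (∑ i, |(k i : ℝ)|) ^ (-τ) ≤ |(∑ i, (k i : ℝ) * ω i) - (m : ℝ)|) :
    ∀ k : Fin n → ℤ, k ≠ 0 → ∀ m : ℤ, ∑ i, (k i : ℝ) * ω i ≠ m := by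
  intro k hk m h
  have h1 := hdio k hk m
  rw [h, sub_self, abs_zero] at h1
  obtain ⟨i, hi⟩ := Function.ne_iff.1 hk
  have h2 : 0 < ∑ i, |(k i : ℝ)| :=
    Finset.sum_pos' (fun i _ => abs_nonneg _)
      ⟨i, Finset.mem_univ i, abs_pos.2 (by exact_mod_cast hi)⟩
  have h3 := mul_pos hν (Real.rpow_pos_of_pos h2 (-τ))
  linarith

/-- If a linear functional `Λ` kills the direction `V` of the perturbation, then `Λ ∘ l_j` is
constant for every `j ≥ 1`: at order `j` the Lindstedt equation reads
`Λ (l_j (σ + ω)) = Λ (l_j σ)`. -/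
lemma lindstedt_const {ω : Fin n → ℝ}
    (hω : ∀ k : Fin n → ℤ, k ≠ 0 → ∀ m : ℤ, ∑ i, (k i : ℝ) * ω i ≠ m)
    {g : (Fin n → ℝ) × ℝ → ℝ} {V : (Fin n → ℝ) × ℝ} {y₀ : ℝ}
    {F : ℝ → (Fin n → ℝ) × ℝ → (Fin n → ℝ) × ℝ}
    (hF : ∀ ε p, F ε p = p + (ω, 0) + (ε * g p) • V)
    {l : ℕ → (Fin n → ℝ) → (Fin n → ℝ) × ℝ} (hlc : ∀ j, Continuous (l j))
    (hl0 : ∀ σ, l 0 σ = (σ, y₀)) (hlper : ∀ j, 1 ≤ j → Per (l j))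
    (hlind : ∀ N : ℕ, ∃ C : ℝ, ∀ ε : ℝ, 0 < ε → ε ≤ 1 → ∀ σ : Fin n → ℝ,
      ‖F ε (∑ j ∈ Finset.range (N + 1), ε ^ j • l j σ) -
          ∑ j ∈ Finset.range (N + 1), ε ^ j • l j (σ + ω)‖ ≤ C * ε ^ (N + 1))
    (Λ : ((Fin n → ℝ) × ℝ) →L[ℝ] ℝ) (hΛ : Λ V = 0) :
    ∀ j, 1 ≤ j → ∀ σ, Λ (l j σ) = Λ (l j 0) := by
  intro j
  induction j using Nat.strong_induction_on with
  | _ j ih =>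
    intro hj
    obtain ⟨j, rfl⟩ := Nat.exists_eq_add_of_le' hj
    refine const_of_invariant hω (f := fun σ => Λ (l (j + 1) σ)) (Λ.continuous.comp (hlc _))
      (fun σ k => by simp only [hlper _ hj σ k]) fun σ => ?_
    obtain ⟨C, hC⟩ := hlind (j + 1)
    set w := Λ (l (j + 1) σ) - Λ (l (j + 1) (σ + ω)) with hw
    have hexp : ∀ ε : ℝ, Λ (F ε (∑ i ∈ Finset.range (j + 1 + 1), ε ^ i • l i σ) -
        ∑ i ∈ Finset.range (j + 1 + 1), ε ^ i • l i (σ + ω)) = ε ^ (j + 1) * w := by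
      intro ε
      rw [hF]
      have hlow : ∑ i ∈ Finset.range j, ε ^ (i + 1) * Λ (l (i + 1) σ)
          = ∑ i ∈ Finset.range j, ε ^ (i + 1) * Λ (l (i + 1) (σ + ω)) := by
        refine Finset.sum_congr rfl fun i hi => ?_
        have hi' := Finset.mem_range.1 hi
        rw [ih (i + 1) (by omega) (by omega) σ, ih (i + 1) (by omega) (by omega) (σ + ω)]
      have h0 : Λ (σ + ω, y₀) = Λ (σ, y₀) + Λ (ω, 0) := by
        rw [← map_add]; simp
      simp only [map_sub, map_add, map_smul, map_sum, smul_eq_mul, hΛ, mul_zero, add_zero]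
      rw [Finset.sum_range_succ, Finset.sum_range_succ', Finset.sum_range_succ,
        Finset.sum_range_succ', hlow, hl0, hl0, h0, hw]
      ring
    have hbd : ∀ ε : ℝ, 0 < ε → ε ≤ 1 → |w| ≤ ‖Λ‖ * C * ε := by
      intro ε he he1
      have h1 := Λ.le_opNorm (F ε (∑ i ∈ Finset.range (j + 1 + 1), ε ^ i • l i σ) -
        ∑ i ∈ Finset.range (j + 1 + 1), ε ^ i • l i (σ + ω))
      rw [hexp, Real.norm_eq_abs, abs_mul, abs_of_pos (pow_pos he _)] at h1
      have h2 := h1.trans (mul_le_mul_of_nonneg_left (hC ε he he1 σ) (norm_nonneg Λ))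
      have h3 : ε ^ (j + 1) * |w| ≤ ε ^ (j + 1) * (‖Λ‖ * C * ε) := by
        refine h2.trans (le_of_eq ?_)
        ring
      exact le_of_mul_le_mul_left h3 (pow_pos he _)
    have hw0 : |w| ≤ 0 := by
      refine le_of_forall_pos_le_add fun e he => ?_
      set D := |‖Λ‖ * C| + 1 with hD
      have hDpos : 0 < D := by positivity
      have h1 := hbd (min 1 (e / D)) (by positivity) (min_le_left _ _)
      have h2 : ‖Λ‖ * C * min 1 (e / D) ≤ D * (e / D) := by
        have : ‖Λ‖ * C ≤ D := (le_abs_self _).trans (by rw [hD]; linarith)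
        exact mul_le_mul this (min_le_right _ _) (by positivity) hDpos.le
      rw [mul_div_cancel₀ _ hDpos.ne'] at h2
      linarith
    have : w = 0 := abs_eq_zero.1 (le_antisymm hw0 (abs_nonneg _))
    linarith

/-- The case `L ≠ 0`. The constancy of the functionals vanishing on `(v, L)` shows that the
truncated series is, up to a shift of the parameter, a graph `t = S z` in the coordinates `chart`;
its invariance error is of order `ε ^ (N + 2)`, and `invariant_graph_chart` loses one power
of `ε`. -/
lemma torus_of_ne_zero {ω : Fin n → ℝ}
    (hω : ∀ k : Fin n → ℤ, k ≠ 0 → ∀ m : ℤ, ∑ i, (k i : ℝ) * ω i ≠ m)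
    {g : (Fin n → ℝ) × ℝ → ℝ} (hg : ContDiff ℝ (⊤ : ℕ∞) g)
    (hgper : ∀ (x : Fin n → ℝ) (y : ℝ) (k : Fin n → ℤ) (m : ℤ),
      g (x + fun i => (k i : ℝ), y + (m : ℝ)) = g (x, y))
    {v : Fin n → ℝ} {L y₀ : ℝ} (hL : 1 ≤ |L|)
    (hnd : (∫ σ in Set.Icc (0 : Fin n → ℝ) 1, deriv (fun y => g (σ, y)) y₀) ≠ 0)
    {F : ℝ → (Fin n → ℝ) × ℝ → (Fin n → ℝ) × ℝ}
    (hF : ∀ ε p, F ε p = p + (ω, 0) + (ε * g p) • (v, L))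
    {l : ℕ → (Fin n → ℝ) → (Fin n → ℝ) × ℝ} (hlc : ∀ j, Continuous (l j))
    (hl0 : ∀ σ, l 0 σ = (σ, y₀)) (hlper : ∀ j, 1 ≤ j → Per (l j))
    (hlind : ∀ N : ℕ, ∃ C : ℝ, ∀ ε : ℝ, 0 < ε → ε ≤ 1 → ∀ σ : Fin n → ℝ,
      ‖F ε (∑ j ∈ Finset.range (N + 1), ε ^ j • l j σ) -
          ∑ j ∈ Finset.range (N + 1), ε ^ j • l j (σ + ω)‖ ≤ C * ε ^ (N + 1)) (N : ℕ) :
    ∃ ε₀ : ℝ, 0 < ε₀ ∧ ∃ C' : ℝ, 0 < C' ∧ ∀ ε : ℝ, 0 < ε → ε < ε₀ →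
      ∃ lstar : (Fin n → ℝ) → (Fin n → ℝ) × ℝ, (∀ m : ℕ, ContDiff ℝ m lstar) ∧
        (∀ (σ : Fin n → ℝ) (k : Fin n → ℤ),
          lstar (σ + fun i => (k i : ℝ)) - ((fun i => (k i : ℝ)), (0 : ℝ)) = lstar σ) ∧
        (∀ σ, F ε (lstar σ) = lstar (σ + ω)) ∧
        ∀ σ, ‖(∑ j ∈ Finset.range (N + 1), ε ^ j • l j σ) - lstar σ‖ ≤ C' * ε ^ (N + 1) := by
  have hL0 : L ≠ 0 := by
    rintro rfl
    norm_num at hL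
  -- the coefficients split as `l_j = (λ_j, 0) + t_j (v, L)` with constant `λ_j`
  set t : ℕ → (Fin n → ℝ) → ℝ := fun j σ => (l j σ).2 / L with ht
  set lam : ℕ → (Fin n → ℝ) := fun j => (l j 0).1 - t j 0 • v with hlam
  have hsplit : ∀ j, 1 ≤ j → ∀ σ, l j σ = (lam j + t j σ • v, t j σ * L) := by
    intro j hj σ
    refine Prod.ext ?_ ?_
    · ext i
      have h := lindstedt_const hω hF hlc hl0 hlper hlind
        ((ContinuousLinearMap.proj i).comp (ContinuousLinearMap.fst ℝ (Fin n → ℝ) ℝ)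
          - (v i / L) • ContinuousLinearMap.snd ℝ (Fin n → ℝ) ℝ)
        (by simp; field_simp; ring) j hj σ
      simp at h
      simp [hlam, ht]
      have e1 : (l j σ).2 / L * v i = v i / L * (l j σ).2 := by ring
      have e2 : (l j 0).2 / L * v i = v i / L * (l j 0).2 := by ring
      linarith
    · simp [ht, hL0]
  have htper : ∀ j, 1 ≤ j → Per (t j) := fun j hj σ k => by simp only [ht, hlper j hj σ k]
  have htc : ∀ j, Continuous (t j) := fun j => (continuous_snd.comp (hlc j)).div_const L
  choose! X hX0 hX using fun j (hj : 1 ≤ j) => (htper j hj).bounded (htc j)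
  obtain ⟨Y, hY0, hY⟩ := (hlper (N + 1) (by omega)).bounded (hlc (N + 1))
  obtain ⟨C₀, hC₀⟩ := hlind (N + 1)
  set C := max C₀ 1 with hC
  have hCpos : 0 < C := lt_of_lt_of_le one_pos (le_max_right _ _)
  obtain ⟨ε₁, hε₁, K, hK, δ, hδ, hgraph⟩ := invariant_graph_chart hω hg hgper v L y₀ hL0 hnd
  set Z := ∑ j ∈ Finset.range (N + 1), X (j + 1) with hZ
  have hZ0 : 0 ≤ Z := Finset.sum_nonneg fun j _ => hX0 _ (by omega)
  refine ⟨min (min 1 ε₁) (min (δ / (Z + 1)) (δ / (2 * K * C))), by positivity,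
    Y + 2 * K * C * ‖((v, L) : (Fin n → ℝ) × ℝ)‖ + 1, by positivity, fun ε hε hlt => ?_⟩
  have hε1 : ε ≤ 1 := (hlt.trans_le ((min_le_left _ _).trans (min_le_left _ _))).le
  have hεε₁ : ε < ε₁ := hlt.trans_le ((min_le_left _ _).trans (min_le_right _ _))
  have hεZ : ε * (Z + 1) ≤ δ :=
    (le_div_iff₀ (by positivity)).1 (hlt.trans_le ((min_le_right _ _).trans (min_le_left _ _))).le
  have hεK : ε * (2 * K * C) ≤ δ :=
    (le_div_iff₀ (by positivity)).1 (hlt.trans_le ((min_le_right _ _).trans (min_le_right _ _))).le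
  set c : Fin n → ℝ := ∑ j ∈ Finset.range (N + 1), ε ^ (j + 1) • lam (j + 1) with hc
  set S₀ : (Fin n → ℝ) → ℝ :=
    fun σ => ∑ j ∈ Finset.range (N + 1), ε ^ (j + 1) * t (j + 1) σ with hS₀
  have hsum : ∀ σ, ∑ j ∈ Finset.range (N + 1 + 1), ε ^ j • l j σ
      = chart v L y₀ (σ + c, S₀ σ) := by
    intro σ
    rw [Finset.sum_range_succ', hl0, pow_zero, one_smul]
    have h1 : ∑ j ∈ Finset.range (N + 1), ε ^ (j + 1) • l (j + 1) σ
        = (c + S₀ σ • v, S₀ σ * L) := by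
      have h2 : ∀ j ∈ Finset.range (N + 1), ε ^ (j + 1) • l (j + 1) σ
          = (ε ^ (j + 1) • lam (j + 1) + (ε ^ (j + 1) * t (j + 1) σ) • v,
              ε ^ (j + 1) * t (j + 1) σ * L) := by
        intro j _
        rw [hsplit (j + 1) (by omega) σ, Prod.smul_mk, smul_add, smul_smul, smul_eq_mul, mul_assoc]
      rw [Finset.sum_congr rfl h2, hc, hS₀, Finset.sum_smul, Finset.sum_mul,
        ← Finset.sum_add_distrib]
      refine Prod.ext ?_ ?_
      · rw [Prod.fst_sum]
      · rw [Prod.snd_sum]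
    rw [h1, chart, Prod.mk_add_mk]
    refine Prod.ext ?_ ?_
    · simp only; abel
    · simp only; ring
  have hFchart : ∀ z s, F ε (chart v L y₀ (z, s))
      = chart v L y₀ (z + ω, s + ε * g (chart v L y₀ (z, s))) := by
    intro z s
    rw [hF]
    generalize g (chart v L y₀ (z, s)) = a
    simp only [chart, Prod.smul_mk, Prod.mk_add_mk, smul_eq_mul, add_smul]
    refine Prod.ext ?_ ?_
    · simp only; abel
    · simp only; ring
  have hchsub : ∀ z s s', chart v L y₀ (z, s) - chart v L y₀ (z, s') = (s - s') • (v, L) := by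
    intro z s s'
    simp only [chart, Prod.smul_mk, Prod.mk_sub_mk, smul_eq_mul, sub_smul]
    refine Prod.ext ?_ ?_
    · simp only; abel
    · simp only; ring
  have hS₀c : Continuous S₀ := by
    rw [hS₀]
    exact continuous_finsetSum _ fun j _ => continuous_const.mul (htc _)
  have hS₀p : Per S₀ := fun σ k => by
    simp only [hS₀]
    exact Finset.sum_congr rfl fun j _ => by rw [htper (j + 1) (by omega) σ k]
  have hS₀b : ∀ σ, |S₀ σ| ≤ δ := by
    intro σ
    have h1 : |S₀ σ| ≤ ∑ j ∈ Finset.range (N + 1), ε * X (j + 1) := by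
      refine (Finset.abs_sum_le_sum_abs _ _).trans (Finset.sum_le_sum fun j _ => ?_)
      rw [abs_mul, abs_of_pos (pow_pos hε _)]
      have := hX (j + 1) (by omega) σ
      rw [Real.norm_eq_abs] at this
      have h2 : ε ^ (j + 1) ≤ ε := pow_le_of_le_one hε.le hε1 (by omega)
      gcongr
    rw [← Finset.mul_sum] at h1
    nlinarith
  have hρ : 2 * K / ε * (C * ε ^ (N + 2)) = 2 * K * C * ε ^ (N + 1) := by
    field_simp
    ring
  obtain ⟨T, hTs, hTp, hTe, hTb⟩ := hgraph ε hε hεε₁ (fun z => S₀ (z - c))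
    (hS₀c.comp (continuous_id.sub continuous_const))
    (fun σ k => by
      have : (σ + fun i => (k i : ℝ)) - c = (σ - c) + fun i => (k i : ℝ) := by abel
      simp only [this, hS₀p (σ - c) k])
    (fun z => hS₀b _) (C * ε ^ (N + 2)) (by positivity)
    (by
      rw [hρ]
      have : ε ^ (N + 1) ≤ ε := pow_le_of_le_one hε.le hε1 (by omega)
      calc 2 * K * C * ε ^ (N + 1) ≤ 2 * K * C * ε := by gcongr
        _ ≤ δ := by linarith)
    (by
      intro z
      have h1 := hC₀ ε hε hε1 (z - c)
      rw [hsum, hsum, hFchart] at h1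
      have e1 : z - c + c = z := by abel
      have e2 : z - c + ω + c = z + ω := by abel
      have e3 : z - c + ω = z + ω - c := by abel
      rw [e1, e2, e3, hchsub, norm_smul, Real.norm_eq_abs] at h1
      have h2 : 1 ≤ ‖((v, L) : (Fin n → ℝ) × ℝ)‖ := hL.trans (norm_snd_le (v, L))
      have h3 := le_mul_of_one_le_right
        (abs_nonneg (S₀ (z - c) + ε * g (chart v L y₀ (z, S₀ (z - c))) - S₀ (z + ω - c))) h2
      refine h3.trans (h1.trans ?_)
      gcongr
      exact le_max_left _ _)
  refine ⟨fun σ => chart v L y₀ (σ + c, T (σ + c)), ?_, ?_, ?_, ?_⟩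
  · intro m
    have h1 : ContDiff ℝ m fun σ => T (σ + c) := (hTs m).comp (contDiff_id.add contDiff_const)
    exact ((contDiff_id.add contDiff_const).add (h1.smul contDiff_const)).prodMk
      (contDiff_const.add (h1.mul contDiff_const))
  · intro σ k
    have e1 : (σ + fun i => (k i : ℝ)) + c = (σ + c) + fun i => (k i : ℝ) := by abel
    simp only [chart, e1, hTp (σ + c) k, Prod.mk_sub_mk, sub_zero]
    refine Prod.ext ?_ rfl
    simp only
    abel
  · intro σ
    have e1 : σ + ω + c = σ + c + ω := by abel
    simp only [hFchart, e1, hTe]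
  · intro σ
    have h1 := hsum σ
    rw [Finset.sum_range_succ] at h1
    rw [eq_sub_of_add_eq h1, sub_right_comm, hchsub]
    have h2 := hTb (σ + c)
    rw [hρ, abs_sub_comm] at h2
    simp only [add_sub_cancel_right] at h2
    have h3 : ‖ε ^ (N + 1) • l (N + 1) σ‖ ≤ ε ^ (N + 1) * Y := by
      rw [norm_smul, norm_pow, Real.norm_eq_abs, abs_of_pos hε]
      gcongr
      exact hY σ
    have h4 : ‖(S₀ σ - T (σ + c)) • ((v, L) : (Fin n → ℝ) × ℝ)‖
        ≤ 2 * K * C * ε ^ (N + 1) * ‖((v, L) : (Fin n → ℝ) × ℝ)‖ := by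
      rw [norm_smul, Real.norm_eq_abs]
      gcongr
    have h5 : 0 < ε ^ (N + 1) := pow_pos hε _
    refine (norm_sub_le _ _).trans ((add_le_add h4 h3).trans ?_)
    nlinarith

/-- The case `L = 0`. The second component of the truncated series is constant and preserved by
the map, so the truncated series itself parametrises an invariant torus; the first component is a
diffeomorphism close to the identity, which defines the inner dynamics. -/
lemma torus_of_eq_zero {ω : Fin n → ℝ}
    (hω : ∀ k : Fin n → ℤ, k ≠ 0 → ∀ m : ℤ, ∑ i, (k i : ℝ) * ω i ≠ m)
    {g : (Fin n → ℝ) × ℝ → ℝ} (hg : ContDiff ℝ (⊤ : ℕ∞) g)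
    (hgper : ∀ (x : Fin n → ℝ) (y : ℝ) (k : Fin n → ℤ) (m : ℤ),
      g (x + fun i => (k i : ℝ), y + (m : ℝ)) = g (x, y))
    {v : Fin n → ℝ} {y₀ : ℝ}
    {F : ℝ → (Fin n → ℝ) × ℝ → (Fin n → ℝ) × ℝ}
    (hF : ∀ ε p, F ε p = p + (ω, 0) + (ε * g p) • (v, (0 : ℝ)))
    {l : ℕ → (Fin n → ℝ) → (Fin n → ℝ) × ℝ} (hls : ∀ j, ContDiff ℝ (⊤ : ℕ∞) (l j))
    (hl0 : ∀ σ, l 0 σ = (σ, y₀)) (hlper : ∀ j, 1 ≤ j → Per (l j))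
    (hlind : ∀ N : ℕ, ∃ C : ℝ, ∀ ε : ℝ, 0 < ε → ε ≤ 1 → ∀ σ : Fin n → ℝ,
      ‖F ε (∑ j ∈ Finset.range (N + 1), ε ^ j • l j σ) -
          ∑ j ∈ Finset.range (N + 1), ε ^ j • l j (σ + ω)‖ ≤ C * ε ^ (N + 1)) (N : ℕ) :
    ∃ ε₀ : ℝ, 0 < ε₀ ∧ ∃ C' : ℝ, 0 < C' ∧ ∀ ε : ℝ, 0 < ε → ε < ε₀ →
      ∃ u : (Fin n → ℝ) → (Fin n → ℝ), (∀ m : ℕ, ContDiff ℝ m u) ∧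
        (∀ (σ : Fin n → ℝ) (k : Fin n → ℤ),
          u (σ + fun i => (k i : ℝ)) - (fun i => (k i : ℝ)) = u σ) ∧
        (∀ σ, F ε (∑ j ∈ Finset.range (N + 1), ε ^ j • l j σ)
          = ∑ j ∈ Finset.range (N + 1), ε ^ j • l j (u σ)) ∧
        ∀ σ, ‖(σ + ω) - u σ‖ ≤ C' * ε ^ (N + 1) := by
  have hsnd : ∀ j, 1 ≤ j → ∀ σ, (l j σ).2 = (l j 0).2 := fun j hj σ =>
    lindstedt_const hω hF (fun j => (hls j).continuous) hl0 hlper hlind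
      (ContinuousLinearMap.snd ℝ (Fin n → ℝ) ℝ) (by simp) j hj σ
  have hlip : ∀ j, 1 ≤ j → ∃ X, 0 ≤ X ∧ ∀ z h, ‖l j (z + h) - l j z‖ ≤ X * ‖h‖ := fun j hj =>
    (hlper j hj).lipschitz ((hls j).of_le (by exact_mod_cast le_top))
  choose! X hX0 hX using hlip
  obtain ⟨C₀, hC₀⟩ := hlind N
  set C := max C₀ 1 with hC
  have hCpos : 0 < C := lt_of_lt_of_le one_pos (le_max_right _ _)
  set Z := ∑ j ∈ Finset.range N, X (j + 1) with hZ
  have hZ0 : 0 ≤ Z := Finset.sum_nonneg fun j _ => hX0 _ (by omega)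
  refine ⟨min 1 (1 / (2 * (Z + 1))), by positivity, 2 * C, by positivity, fun ε hε hlt => ?_⟩
  have hε1 : ε ≤ 1 := (hlt.trans_le (min_le_left _ _)).le
  have hεZ : ε * Z ≤ 1 / 2 := by
    have := (le_div_iff₀ (by positivity)).1 (hlt.trans_le (min_le_right _ _)).le
    nlinarith
  set P : (Fin n → ℝ) → (Fin n → ℝ) × ℝ :=
    fun σ => ∑ j ∈ Finset.range (N + 1), ε ^ j • l j σ with hP
  set R : (Fin n → ℝ) → (Fin n → ℝ) × ℝ :=
    fun σ => ∑ j ∈ Finset.range N, ε ^ (j + 1) • l (j + 1) σ with hR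
  have hPR : ∀ σ, P σ = R σ + (σ, y₀) := by
    intro σ
    simp only [hP, hR]
    rw [Finset.sum_range_succ', hl0, pow_zero, one_smul]
  have hRper : Per R := fun σ k => by
    simp only [hR]
    exact Finset.sum_congr rfl fun j _ => by rw [hlper (j + 1) (by omega) σ k]
  have hPper : ∀ (σ : Fin n → ℝ) (k : Fin n → ℤ),
      P (σ + fun i => (k i : ℝ)) = P σ + (fun i => (k i : ℝ), 0) := by
    intro σ k
    rw [hPR, hPR, hRper σ k, add_assoc]
    congr 1
    exact Prod.ext rfl (add_zero y₀).symm
  have hPsnd : ∀ σ σ', (P σ).2 = (P σ').2 := by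
    intro σ σ'
    rw [hPR, hPR]
    simp only [hR, Prod.snd_add, Prod.snd_sum, Prod.smul_snd]
    congr 1
    refine Finset.sum_congr rfl fun j _ => ?_
    rw [hsnd (j + 1) (by omega) σ, hsnd (j + 1) (by omega) σ']
  have hRlip : ∀ a b, ‖R a - R b‖ ≤ 1 / 2 * ‖a - b‖ := by
    intro a b
    have h1 : ‖R a - R b‖ ≤ ∑ j ∈ Finset.range N, ε * X (j + 1) * ‖a - b‖ := by
      simp only [hR]
      rw [← Finset.sum_sub_distrib]
      refine norm_sum_le_of_le _ fun j _ => ?_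
      have h2 := hX (j + 1) (by omega) b (a - b)
      rw [add_sub_cancel] at h2
      have h3 : ε ^ (j + 1) ≤ ε := pow_le_of_le_one hε.le hε1 (by omega)
      rw [← smul_sub, norm_smul, norm_pow, Real.norm_eq_abs, abs_of_pos hε, mul_assoc]
      gcongr
    rw [← Finset.sum_mul, ← Finset.mul_sum] at h1
    exact h1.trans (by gcongr)
  have hPs : ∀ m : ℕ, ContDiff ℝ m P := fun m =>
    ContDiff.sum fun j _ => (contDiff_infty.1 (hls j) m).const_smul (ε ^ j)
  set Q : (Fin n → ℝ) → (Fin n → ℝ) := fun σ => (P σ).1 with hQ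
  have hQs : ∀ m : ℕ, ContDiff ℝ m Q := fun m => contDiff_fst.comp (hPs m)
  have hQsub : ∀ a b, ‖Q a - Q b - (a - b)‖ ≤ 1 / 2 * ‖a - b‖ := by
    intro a b
    have h1 : Q a - Q b - (a - b) = (R a - R b).1 := by
      simp only [hQ, hPR, Prod.fst_add, Prod.fst_sub]
      abel
    rw [h1]
    exact (norm_fst_le _).trans (hRlip a b)
  have hexpand : ∀ a b, ‖a - b‖ ≤ 2 * ‖Q a - Q b‖ := by
    intro a b
    have h1 := hQsub a b
    have h2 := norm_sub_norm_le (a - b) (Q a - Q b)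
    rw [norm_sub_rev (a - b)] at h2
    linarith
  have happ : ApproximatesLinearOn Q
      ((ContinuousLinearEquiv.refl ℝ (Fin n → ℝ) : (Fin n → ℝ) ≃L[ℝ] (Fin n → ℝ)) :
        (Fin n → ℝ) →L[ℝ] (Fin n → ℝ)) Set.univ (1 / 2) := by
    intro a _ b _
    simpa using hQsub a b
  have hcond : Subsingleton (Fin n → ℝ) ∨ (1 / 2 : NNReal) <
      ‖((ContinuousLinearEquiv.refl ℝ (Fin n → ℝ)).symm :
        (Fin n → ℝ) →L[ℝ] (Fin n → ℝ))‖₊⁻¹ := by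
    rcases subsingleton_or_nontrivial (Fin n → ℝ) with h | h
    · exact Or.inl h
    · right
      have h1 : ‖((ContinuousLinearEquiv.refl ℝ (Fin n → ℝ)).symm :
        (Fin n → ℝ) →L[ℝ] (Fin n → ℝ))‖₊ = 1 := by
        ext
        exact ContinuousLinearMap.norm_id
      rw [h1, inv_one]
      exact NNReal.half_lt_self one_ne_zero
  set H := happ.toHomeomorph Q hcond with hH
  have hHQ : ∀ a, H a = Q a := fun a => rfl
  have hQH : ∀ a, Q (H.symm a) = a := fun a => H.apply_symm_apply a
  have hHs : ∀ m : ℕ, ContDiff ℝ m H.symm := by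
    -- the derivative of `Q` differs from the identity by at most `1 / 2`, hence is invertible
    have hQd : ∀ a, HasFDerivAt Q (fderiv ℝ Q a) a := fun a =>
      ((hQs 1).differentiable (by simp) a).hasFDerivAt
    have hinj : ∀ a, Function.Injective (fderiv ℝ Q a : (Fin n → ℝ) →ₗ[ℝ] (Fin n → ℝ)) := by
      intro a
      rw [← LinearMap.ker_eq_bot, LinearMap.ker_eq_bot']
      intro h hh
      have hh' : fderiv ℝ Q a h = 0 := hh
      have hDl : LipschitzWith (1 / 2) fun b => Q b - b := by
        refine LipschitzWith.of_dist_le_mul fun b b' => ?_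
        rw [dist_eq_norm, dist_eq_norm, sub_sub_sub_comm]
        simpa using hQsub b b'
      have h1 := ((hQd a).sub (hasFDerivAt_id a)).le_of_lipschitz hDl
      have h2 := ContinuousLinearMap.le_of_opNorm_le _ h1 h
      have h3 : (fderiv ℝ Q a - ContinuousLinearMap.id ℝ (Fin n → ℝ)) h = -h := by
        simp [hh']
      rw [h3, norm_neg] at h2
      push_cast at h2
      exact norm_eq_zero.1 (le_antisymm (by linarith) (norm_nonneg h))
    intro m
    refine H.contDiff_symm (f₀' := fun a =>
      (LinearEquiv.ofInjectiveEndo _ (hinj a)).toContinuousLinearEquiv) (fun a => ?_) (hQs m)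
    have he : (((LinearEquiv.ofInjectiveEndo _ (hinj a)).toContinuousLinearEquiv :
        (Fin n → ℝ) ≃L[ℝ] (Fin n → ℝ)) : (Fin n → ℝ) →L[ℝ] (Fin n → ℝ)) = fderiv ℝ Q a :=
      ContinuousLinearMap.ext fun x => rfl
    change HasFDerivAt Q _ a
    rw [he]
    exact hQd a
  set u : (Fin n → ℝ) → (Fin n → ℝ) := fun σ => H.symm (F ε (P σ)).1 with hu
  have hQu : ∀ σ, Q (u σ) = (F ε (P σ)).1 := fun σ => hQH _
  have hFper : ∀ (p : (Fin n → ℝ) × ℝ) (k : Fin n → ℤ),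
      F ε (p + (fun i => (k i : ℝ), 0)) = F ε p + (fun i => (k i : ℝ), 0) := by
    intro p k
    have h1 : g (p + (fun i => (k i : ℝ), 0)) = g p := by
      have h := hgper p.1 p.2 k 0
      rw [Int.cast_zero] at h
      exact h
    rw [hF, hF, h1]
    abel
  refine ⟨u, ?_, ?_, ?_, ?_⟩
  · intro m
    refine (hHs m).comp (contDiff_fst.comp ?_)
    simp only [hF]
    have hg' : ContDiff ℝ m g := contDiff_infty.1 hg m
    exact ((hPs m).add contDiff_const).add
      ((contDiff_const.mul (hg'.comp (hPs m))).smul contDiff_const)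
  · intro σ k
    have h1 : Q (u σ + fun i => (k i : ℝ)) = Q (u (σ + fun i => (k i : ℝ))) := by
      rw [hQu, hPper, hFper, Prod.fst_add, ← hQu]
      simp only [hQ, hPper, Prod.fst_add]
    have h2 := hexpand (u (σ + fun i => (k i : ℝ))) (u σ + fun i => (k i : ℝ))
    rw [h1, sub_self, norm_zero, mul_zero] at h2
    rw [sub_eq_zero.1 (norm_eq_zero.1 (le_antisymm h2 (norm_nonneg _)))]
    abel
  · intro σ
    refine Prod.ext (hQu σ).symm ?_
    change (F ε (P σ)).2 = (P (u σ)).2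
    rw [hPsnd (u σ) σ, hF]
    simp
  · intro σ
    have h1 := hexpand (σ + ω) (u σ)
    rw [hQu] at h1
    have h2 : ‖Q (σ + ω) - (F ε (P σ)).1‖ ≤ C * ε ^ (N + 1) := by
      rw [norm_sub_rev]
      refine (norm_fst_le (F ε (P σ) - P (σ + ω))).trans ((hC₀ ε hε hε1 σ).trans ?_)
      gcongr
      exact le_max_left _ _
    linarith

end Lindstedt


/-- The truncated Lindstedt series approximates a true invariant torus of
the foliation preserving map: given the Lindstedt coefficients `l_j` of Statement 9,
for every order `N` and regularity `M` there are `ε₀, C' > 0` such that for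
`ε ∈ (0,ε₀)` there exist `C^M` maps `l_*` (embedding, a periodic perturbation of
`σ ↦ (σ,0)`) and `u_*` (internal dynamics, a periodic perturbation of the identity)
with `F_ε ∘ l_* ≡ l_* ∘ u_*` modulo `ℤ^{d−1} × ℤ`, and
`sup|l^{≤N} − l_*| ≤ C' ε^{N+1}`, `sup|(·+ω) − u_*| ≤ C' ε^{N+1}`. -/
theorem lindstedt_series_approximates_true_invariant_torus
    (d : ℕ) (hd : 2 ≤ d) (ν τ : ℝ) (hν : 0 < ν) (hτ : 0 < τ)
    (ω : Fin (d - 1) → ℝ)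
    (hdio : ∀ k : Fin (d - 1) → ℤ, k ≠ 0 → ∀ n : ℤ,
      ν * (∑ i, |(k i : ℝ)|) ^ (-τ) ≤ |(∑ i, (k i : ℝ) * ω i) - (n : ℝ)|)
    (L₁ : Fin (d - 1) → ℤ) (L₂ : ℤ)
    (g : ((Fin (d - 1) → ℝ) × ℝ) → ℝ) (hg : ContDiff ℝ (⊤ : ℕ∞) g)
    (hgper : ∀ (x : Fin (d - 1) → ℝ) (y : ℝ) (k : Fin (d - 1) → ℤ) (m : ℤ),
      g (x + fun i => (k i : ℝ), y + (m : ℝ)) = g (x, y))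
    (y₀ : ℝ)
    (havg : (∫ σ in Set.Icc (0 : Fin (d - 1) → ℝ) 1, g (σ, y₀)) = 0)
    (hnd : (∫ σ in Set.Icc (0 : Fin (d - 1) → ℝ) 1, deriv (fun y => g (σ, y)) y₀) ≠ 0)
    (F : ℝ → ((Fin (d - 1) → ℝ) × ℝ) → ((Fin (d - 1) → ℝ) × ℝ))
    (hF : ∀ (ε : ℝ) (x : Fin (d - 1) → ℝ) (y : ℝ), F ε (x, y) =
      (x + ω + (ε * g (x, y)) • (ω + fun i => (L₁ i : ℝ)),
        y + ε * (L₂ : ℝ) * g (x, y)))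
    (l : ℕ → (Fin (d - 1) → ℝ) → ((Fin (d - 1) → ℝ) × ℝ))
    (hlsmooth : ∀ j, ContDiff ℝ (⊤ : ℕ∞) (l j))
    (hl0 : ∀ σ, l 0 σ = (σ, y₀))
    (hlper : ∀ j, 1 ≤ j → ∀ (σ : Fin (d - 1) → ℝ) (k : Fin (d - 1) → ℤ),
      l j (σ + fun i => (k i : ℝ)) = l j σ)
    (hlind : ∀ N : ℕ, ∃ C : ℝ, ∀ ε : ℝ, 0 < ε → ε ≤ 1 → ∀ σ : Fin (d - 1) → ℝ,
      ‖F ε (∑ j ∈ Finset.range (N + 1), ε ^ j • l j σ) -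
          ∑ j ∈ Finset.range (N + 1), ε ^ j • l j (σ + ω)‖ ≤ C * ε ^ (N + 1)) :
    ∀ N M : ℕ, ∃ ε₀ : ℝ, 0 < ε₀ ∧ ∃ C' : ℝ, 0 < C' ∧
      ∀ ε : ℝ, 0 < ε → ε < ε₀ →
      ∃ (lstar : (Fin (d - 1) → ℝ) → ((Fin (d - 1) → ℝ) × ℝ))
        (ustar : (Fin (d - 1) → ℝ) → (Fin (d - 1) → ℝ)),
        ContDiff ℝ (M : ℕ∞) lstar ∧ ContDiff ℝ (M : ℕ∞) ustar ∧
        (∀ (σ : Fin (d - 1) → ℝ) (k : Fin (d - 1) → ℤ),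
          lstar (σ + fun i => (k i : ℝ)) - ((fun i => (k i : ℝ)), (0 : ℝ)) = lstar σ) ∧
        (∀ (σ : Fin (d - 1) → ℝ) (k : Fin (d - 1) → ℤ),
          ustar (σ + fun i => (k i : ℝ)) - (fun i => (k i : ℝ)) = ustar σ) ∧
        (∀ σ : Fin (d - 1) → ℝ, ∃ (k : Fin (d - 1) → ℤ) (m : ℤ),
          F ε (lstar σ) - lstar (ustar σ) = ((fun i => (k i : ℝ)), (m : ℝ))) ∧
        (∀ σ : Fin (d - 1) → ℝ,
          ‖(∑ j ∈ Finset.range (N + 1), ε ^ j • l j σ) - lstar σ‖ ≤ C' * ε ^ (N + 1)) ∧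
        (∀ σ : Fin (d - 1) → ℝ, ‖(σ + ω) - ustar σ‖ ≤ C' * ε ^ (N + 1)) := by
  intro N M
  have hω := nonresonant_of_diophantine hν hdio
  set v : Fin (d - 1) → ℝ := ω + fun i => (L₁ i : ℝ) with hv
  have hF' : ∀ ε p, F ε p = p + (ω, 0) + (ε * g p) • (v, (L₂ : ℝ)) := by
    rintro ε ⟨x, y⟩
    rw [hF]
    refine Prod.ext ?_ ?_
    · simp
    · simp
      ring
  by_cases hL : L₂ = 0
  · subst hL
    simp only [Int.cast_zero] at hF'
    obtain ⟨ε₀, hε₀, C', hC', h⟩ :=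
      torus_of_eq_zero hω hg hgper hF' hlsmooth hl0 hlper hlind N
    refine ⟨ε₀, hε₀, C', hC', fun ε hε hlt => ?_⟩
    obtain ⟨u, hus, hup, hinv, hub⟩ := h ε hε hlt
    refine ⟨fun σ => ∑ j ∈ Finset.range (N + 1), ε ^ j • l j σ, u, ?_, ?_, ?_, hup, ?_, ?_, hub⟩
    · exact ContDiff.sum fun j _ =>
        (contDiff_infty.1 (hlsmooth j) M).const_smul (ε ^ j)
    · exact_mod_cast hus M
    · intro σ k
      simp only
      rw [Finset.sum_range_succ', Finset.sum_range_succ', hl0, hl0, pow_zero, one_smul, one_smul,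
        add_sub_assoc, Finset.sum_congr rfl fun j _ => by rw [hlper (j + 1) (by omega) σ k]]
      simp
    · intro σ
      refine ⟨0, 0, ?_⟩
      rw [hinv, sub_self]
      refine Prod.ext ?_ ?_
      · ext i; simp
      · simp
    · intro σ
      rw [sub_self, norm_zero]
      positivity
  · have hL1 : 1 ≤ |(L₂ : ℝ)| := by exact_mod_cast Int.one_le_abs hL
    obtain ⟨ε₀, hε₀, C', hC', h⟩ :=
      torus_of_ne_zero hω hg hgper hL1 hnd hF' (fun j => (hlsmooth j).continuous) hl0 hlper hlind N
    refine ⟨ε₀, hε₀, C', hC', fun ε hε hlt => ?_⟩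
    obtain ⟨lstar, hls, hlp, hinv, hlb⟩ := h ε hε hlt
    refine ⟨lstar, fun σ => σ + ω, ?_, contDiff_id.add contDiff_const, hlp, ?_, ?_, hlb, ?_⟩
    · exact_mod_cast hls M
    · intro σ k
      simp only
      abel
    · intro σ
      refine ⟨0, 0, ?_⟩
      rw [hinv, sub_self]
      refine Prod.ext ?_ ?_
      · ext i; simp
      · simp
    · intro σ
      rw [sub_self, norm_zero]
      positivity
end

section
/- Let d ≥ 2, let Ω ∈ ℝ^{d−1} satisfy the Diophantine condition of type (ν,τ), let v: 𝕋^{d−1} → 𝕋^{d−1} be a C^∞ diffeomorphism of the torus 𝕋^{d−1} = ℝ^{d−1}/ℤ^{d−1}, let a: 𝕋^{d−1} → ℝ be C^∞ with a(σ) ≠ 0 for all σ, and suppose there is a C^∞ diffeomorphism h: 𝕋^{d−1} → 𝕋^{d−1} such that h^{-1}(v(h(σ))) = σ + Ω for all σ. Then there exist a C^∞ function b: 𝕋^{d−1} → ℝ with b(σ) ≠ 0 for all σ and a constant κ ∈ ℝ ∖ {0}, with |κ| = exp(∫_{𝕋^{d−1}} log|a(h(σ))| dσ), such that a(h(σ))·b(σ)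 = κ·b(σ+Ω) for all σ ∈ 𝕋^{d−1}. Equivalently, the diffeomorphism H(σ,t) = (h(σ), b(σ)·t) of 𝕋^{d−1} × ℝ satisfies ψ(H(σ,t)) = H(σ+Ω, κ·t) for all (σ,t), where ψ(σ,t) = (v(σ), a(σ)·t). -/
open scoped BigOperators
open MeasureTheory

/-!
Writing `f = log |a ∘ h|`, the equation `a(h σ) b(σ) = κ b(σ + Ω)` with `b = exp u` and
`κ = ± exp (∫ f)` (the sign being the constant sign of `a`) becomes the cohomological equation
`u(σ + Ω) - u(σ) = f(σ) - ∫ f` over the rotation by `Ω`.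

This is solved by Fourier series (`exists_cohomological_solution`): the coefficients of `u` are
`û(k) = f̂(k) / (e^{2πi k·Ω} - 1)` for `k ≠ 0`. Integrating by parts (`coef_fderiv`, through the
divergence theorem on the unit cube) shows that `f̂(k)` decays faster than any power of `‖k‖`
(`coef_decay`), while the Diophantine condition bounds the divisor below by a negative power of
`‖k‖` (`small_divisor`). Hence `û` still decays faster than any power, and the series for `u` can
be differentiated termwise to all orders. That the Fourier series of `f` converges to `f`
(`hasSum_coef`) is obtained by descending `f` to the torus `(ℝ/ℤ)ⁿ`. The complex solution `U` is
finally replaced by its real part.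
-/

namespace SkewProduct

open UnitAddTorus

noncomputable section

/-- Invariance under integer translations: functions on `ℝⁿ` that descend to the torus
`ℝⁿ/ℤⁿ`. -/
def IsPeriodic {n : ℕ} {E : Type*} (f : (Fin n → ℝ) → E) : Prop :=
  ∀ (x : Fin n → ℝ) (k : Fin n → ℤ), f (x + fun i => (k i : ℝ)) = f x

/-! ### Characters, Fourier coefficients and their decay -/

/-- The character `x ↦ e^{2πi k·x}` of the torus, lifted to `ℝⁿ`. -/
def torusChar {n : ℕ} (k : Fin n → ℤ) (x : Fin n → ℝ) : ℂ :=
  Complex.exp (2 * Real.pi * Complex.I * ((∑ i, (k i : ℝ) * x i : ℝ) : ℂ))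

/-- The Fourier coefficient `f̂(k) = ∫ e^{-2πi k·x} f(x) dx` over the unit cube. -/
def coef {n : ℕ} (f : (Fin n → ℝ) → ℂ) (k : Fin n → ℤ) : ℂ :=
  ∫ x in Set.Icc (0 : Fin n → ℝ) 1, torusChar (-k) x * f x

/-- A partial derivative of a periodic function has zero mean: in the divergence theorem on the
unit cube, opposite faces cancel. -/
lemma integral_fderiv_eq_zero {n : ℕ} {g : (Fin n → ℝ) → ℂ} (hg : ContDiff ℝ (⊤ : ℕ∞) g)
    (hper : IsPeriodic g) (i : Fin n) :
    ∫ x in Set.Icc (0 : Fin n → ℝ) 1, fderiv ℝ g x (Pi.single i 1) = 0 := by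
  cases n with
  | zero => exact i.elim0
  | succ m =>
    have hdiff : Differentiable ℝ g := hg.differentiable (by simp)
    have hc : Continuous (fderiv ℝ g) := hg.continuous_fderiv (by simp)
    have key := integral_divergence_of_hasFDerivAt_off_countable' (E := ℂ)
      (0 : Fin (m + 1) → ℝ) 1 zero_le_one
      (fun j x => if j = i then g x else 0)
      (fun j x => if j = i then fderiv ℝ g x else 0) ∅ Set.countable_empty
      (fun j => by split_ifs <;> [exact hdiff.continuous.continuousOn; exact continuousOn_const])
      (fun x _ j => by
        split_ifs
        · exact (hdiff x).hasFDerivAt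
        · exact hasFDerivAt_const _ _)
      (by
        apply Continuous.integrableOn_Icc
        refine continuous_finsetSum _ fun j _ => ?_
        split_ifs
        · exact hc.clm_apply continuous_const
        · simpa using continuous_const)
    have hL : ∀ x : Fin (m + 1) → ℝ,
        ∑ j, (if j = i then fderiv ℝ g x else 0) (Pi.single j 1) =
          fderiv ℝ g x (Pi.single i 1) := by
      intro x
      rw [Finset.sum_eq_single i] <;> simp +contextual
    simp only [hL] at key
    rw [key, Finset.sum_eq_zero]
    intro j _
    by_cases hj : j = i
    · subst hj
      simp only [if_true]
      rw [sub_eq_zero]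
      congr 1
      ext y
      have := hper (j.insertNth 0 y) (Pi.single j 1)
      simp only [Pi.one_apply, Pi.zero_apply]
      rw [← this]
      congr 1
      ext l
      refine Fin.succAboveCases j ?_ (fun p => ?_) l <;> simp
    · simp [hj]

lemma torusChar_contDiff {n : ℕ} (k : Fin n → ℤ) : ContDiff ℝ (⊤ : ℕ∞) (torusChar k) := by
  have hlin : ContDiff ℝ (⊤ : ℕ∞) fun x : Fin n → ℝ => ∑ i, (k i : ℝ) * x i :=
    ContDiff.sum fun (i : Fin n) _ => contDiff_const.mul (contDiff_apply ℝ ℝ i)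
  exact ContDiff.cexp (contDiff_const.mul (Complex.ofRealCLM.contDiff.comp hlin))

lemma torusChar_add {n : ℕ} (k : Fin n → ℤ) (x y : Fin n → ℝ) :
    torusChar k (x + y) = torusChar k x * torusChar k y := by
  simp only [torusChar, ← Complex.exp_add, Pi.add_apply, mul_add, Finset.sum_add_distrib,
    Complex.ofReal_add]

lemma torusChar_int {n : ℕ} (k l : Fin n → ℤ) : torusChar k (fun i => (l i : ℝ)) = 1 := by
  rw [torusChar, Complex.exp_eq_one_iff]
  refine ⟨∑ i, k i * l i, ?_⟩
  push_cast
  ring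

lemma torusChar_periodic {n : ℕ} (k : Fin n → ℤ) : IsPeriodic (torusChar k) := by
  intro x l
  rw [torusChar_add, torusChar_int, mul_one]

lemma norm_torusChar {n : ℕ} (k : Fin n → ℤ) (x : Fin n → ℝ) : ‖torusChar k x‖ = 1 := by
  rw [torusChar, show (2 * Real.pi * Complex.I * ((∑ i, (k i : ℝ) * x i : ℝ) : ℂ)) =
    ((2 * Real.pi * (∑ i, (k i : ℝ) * x i) : ℝ) : ℂ) * Complex.I by push_cast; ring]
  exact Complex.norm_exp_ofReal_mul_I _

/-- `torusChar` is the lift to `ℝⁿ` of Mathlib's monomials on `UnitAddTorus`. -/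
lemma mFourier_coe {n : ℕ} (k : Fin n → ℤ) (x : Fin n → ℝ) :
    mFourier k (fun i => (x i : UnitAddCircle)) = torusChar k x := by
  simp only [mFourier, ContinuousMap.coe_mk, fourier_coe_apply, torusChar, ← Complex.exp_sum]
  congr 1
  push_cast
  rw [Finset.mul_sum]
  exact Finset.sum_congr rfl fun i _ => by ring

lemma fderiv_torusChar_single {n : ℕ} (k : Fin n → ℤ) (i : Fin n) (x : Fin n → ℝ) :
    fderiv ℝ (torusChar k) x (Pi.single i 1) =
      2 * Real.pi * Complex.I * k i * torusChar k x := by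
  have h1 : HasFDerivAt (fun x : Fin n → ℝ => ∑ j, (k j : ℝ) * x j)
      (∑ j, (k j : ℝ) • (ContinuousLinearMap.proj j : (Fin n → ℝ) →L[ℝ] ℝ)) x :=
    HasFDerivAt.fun_sum fun j _ => (hasFDerivAt_apply j x).const_mul _
  have h2 := ((Complex.ofRealCLM.hasFDerivAt.comp x h1).const_mul
    (2 * Real.pi * Complex.I)).cexp
  have h3 : fderiv ℝ (torusChar k) x = _ := h2.fderiv
  rw [h3]
  simp [Pi.single_apply, torusChar]
  ring

/-- Integration by parts: `∂ᵢ` acts on Fourier coefficients as multiplication by `2πi kᵢ`. -/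
lemma coef_fderiv {n : ℕ} {f : (Fin n → ℝ) → ℂ} (hf : ContDiff ℝ (⊤ : ℕ∞) f)
    (hper : IsPeriodic f) (i : Fin n) (k : Fin n → ℤ) :
    coef (fun x => fderiv ℝ f x (Pi.single i 1)) k = 2 * Real.pi * Complex.I * k i * coef f k := by
  have hχ := torusChar_contDiff (-k)
  have h0 := integral_fderiv_eq_zero (hχ.mul hf)
    (fun x l => by simp only [torusChar_periodic (-k) x l, hper x l]) i
  have hpt : ∀ x, fderiv ℝ (fun y => torusChar (-k) y * f y) x (Pi.single i 1) =
      torusChar (-k) x * fderiv ℝ f x (Pi.single i 1) -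
        2 * Real.pi * Complex.I * k i * (torusChar (-k) x * f x) := by
    intro x
    rw [fderiv_fun_mul (hχ.differentiable (by simp) x) (hf.differentiable (by simp) x)]
    simp [fderiv_torusChar_single]
    ring
  simp only [hpt] at h0
  rw [integral_sub, integral_const_mul, sub_eq_zero] at h0
  · exact h0
  · exact (hχ.continuous.mul ((hf.continuous_fderiv (by simp)).clm_apply
      continuous_const)).integrableOn_Icc
  · exact (continuous_const.mul (hχ.continuous.mul hf.continuous)).integrableOn_Icc

lemma coef_decay_coord {n : ℕ} (i : Fin n) (N : ℕ) : ∀ {f : (Fin n → ℝ) → ℂ},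
    ContDiff ℝ (⊤ : ℕ∞) f → IsPeriodic f →
    ∃ C, ∀ k : Fin n → ℤ, |(k i : ℝ)| ^ N * ‖coef f k‖ ≤ C := by
  induction N with
  | zero =>
    intro f hf _
    refine ⟨∫ x in Set.Icc (0 : Fin n → ℝ) 1, ‖f x‖, fun k => ?_⟩
    rw [pow_zero, one_mul]
    refine (norm_integral_le_integral_norm _).trans_eq ?_
    simp [norm_torusChar]
  | succ N ih =>
    intro f hf hper
    have hf' : ContDiff ℝ (⊤ : ℕ∞) (fun x => fderiv ℝ f x (Pi.single i 1)) :=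
      (hf.fderiv_right (m := (⊤ : ℕ∞)) (by simp)).clm_apply contDiff_const
    have hper' : IsPeriodic (fun x => fderiv ℝ f x (Pi.single i 1)) := by
      intro x k
      have h1 : (fun y => f (y + fun i => (k i : ℝ))) = f := funext fun y => hper y k
      have h2 := fderiv_comp_add_right (𝕜 := ℝ) (f := f) (x := x) (fun i => (k i : ℝ))
      rw [h1] at h2
      simp only [h2]
    obtain ⟨C, hC⟩ := ih hf' hper'
    refine ⟨C, fun k => le_trans ?_ (hC k)⟩
    rw [coef_fderiv hf hper, pow_succ, mul_assoc]
    gcongr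
    simp only [norm_mul, Complex.norm_intCast, Complex.norm_I, Complex.norm_real,
      Complex.norm_ofNat, mul_one, Real.norm_eq_abs, abs_of_pos Real.pi_pos]
    gcongr
    have := Real.pi_gt_three
    have := abs_nonneg (k i : ℝ)
    nlinarith

/-- The Fourier coefficients of a smooth periodic function decay faster than any power of the
sup norm `‖k‖`. -/
lemma coef_decay {n : ℕ} (N : ℕ) {f : (Fin n → ℝ) → ℂ}
    (hf : ContDiff ℝ (⊤ : ℕ∞) f) (hper : IsPeriodic f) :
    ∃ C, 0 ≤ C ∧ ∀ k : Fin n → ℤ, k ≠ 0 → ‖coef f k‖ ≤ C * (‖k‖⁻¹) ^ N := by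
  choose C hC using fun i => coef_decay_coord i N hf hper
  have hC0 : ∀ i, 0 ≤ C i := fun i => le_trans (by positivity) (hC i 0)
  refine ⟨∑ i, C i, Finset.sum_nonneg fun i _ => hC0 i, fun k hk => ?_⟩
  -- The sup norm is attained at some coordinate; the decay in that coordinate is enough.
  obtain ⟨i, hi⟩ : ∃ i, ‖k‖ = ‖k i‖ := by
    obtain ⟨j, _⟩ := Function.ne_iff.mp hk
    have : Nonempty (Fin n) := ⟨j⟩
    obtain ⟨i, hi⟩ := Finite.exists_max (fun i => ‖k i‖)
    exact ⟨i, le_antisymm ((pi_norm_le_iff_of_nonneg (norm_nonneg _)).2 hi) (norm_le_pi_norm k i)⟩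
  have hpos : 0 < ‖k‖ := norm_pos_iff.2 hk
  rw [inv_pow, ← div_eq_mul_inv, le_div_iff₀ (pow_pos hpos N), mul_comm, hi, Int.norm_eq_abs]
  exact (hC i k).trans (Finset.single_le_sum (fun i _ => hC0 i) (Finset.mem_univ i))

/-! ### Convergence of Fourier series -/

lemma summable_norm_inv_pow (n : ℕ) :
    Summable fun k : Fin n → ℤ => (‖k‖⁻¹) ^ (n + 1) := by
  let L : Submodule ℤ (Fin n → ℝ) := Submodule.span ℤ (Set.range (Pi.basisFun ℝ (Fin n)))
  have hrank : Module.finrank ℤ L = n := by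
    rw [ZLattice.rank ℝ L]; simp
  have hs := ZLattice.summable_norm_pow_inv L (n + 1) (by omega)
  have hmem : ∀ k : Fin n → ℤ, (fun i => (k i : ℝ)) ∈ L := by
    intro k
    rw [(Pi.basisFun ℝ (Fin n)).mem_span_iff_repr_mem ℤ]
    intro i
    exact ⟨k i, by simp⟩
  have hinj : Function.Injective (fun k : Fin n → ℤ => (⟨_, hmem k⟩ : L)) := by
    intro k l hkl
    ext i
    have : (k i : ℝ) = l i := congrFun (congrArg Subtype.val hkl) i
    exact_mod_cast this
  refine (hs.comp_injective hinj).congr fun k => ?_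
  simp only [Function.comp, Submodule.coe_norm]
  congr 2

/-- A smooth periodic function is the pointwise sum of its Fourier series. -/
lemma hasSum_coef {n : ℕ} {f : (Fin n → ℝ) → ℂ}
    (hf : ContDiff ℝ (⊤ : ℕ∞) f) (hper : IsPeriodic f) (x : Fin n → ℝ) :
    HasSum (fun k => coef f k * torusChar k x) (f x) := by
  let π : (Fin n → ℝ) → UnitAddTorus (Fin n) := fun x i => (x i : UnitAddCircle)
  have hπ : IsOpenQuotientMap π :=
    IsOpenQuotientMap.piMap fun _ => QuotientAddGroup.isOpenQuotientMap_mk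
  have hlift : ∀ x y, π x = π y → f x = f y := by
    intro x y hxy
    have : ∀ i, ∃ k : ℤ, y i + k = x i := by
      intro i
      have hi : (x i : UnitAddCircle) = y i := congrFun hxy i
      rw [← sub_eq_zero, ← AddCircle.coe_sub, AddCircle.coe_eq_zero_iff] at hi
      obtain ⟨k, hk⟩ := hi
      refine ⟨k, ?_⟩
      rw [zsmul_one] at hk
      linarith
    choose k hk using this
    rw [← hper y k]
    congr 1
    ext i
    exact (hk i).symm
  -- The function on the torus induced by `f`.
  let F₀ : UnitAddTorus (Fin n) → ℂ := fun z => f (Function.surjInv hπ.surjective z)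
  have hF : ∀ x, F₀ (π x) = f x := fun x => hlift _ _ (Function.surjInv_eq hπ.surjective _)
  let F : C(UnitAddTorus (Fin n), ℂ) :=
    ⟨F₀, hπ.isQuotientMap.continuous_iff.2 (by
      rw [show F₀ ∘ π = f from funext hF]; exact hf.continuous)⟩
  replace hF : ∀ x, F (π x) = f x := hF
  have hcoef : ∀ k, mFourierCoeff F k = coef f k := by
    intro k
    rw [mFourierCoeff_eq_integral _ _ 0, coef, volume_pi,
      ← setIntegral_congr_set Measure.univ_pi_Ioc_ae_eq_Icc]
    have hset : {x : Fin n → ℝ | ∀ i, x i ∈ Set.Ioc ((0 : Fin n → ℝ) i) ((0 : Fin n → ℝ) i + 1)}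
        = Set.univ.pi fun i => Set.Ioc ((0 : Fin n → ℝ) i) ((1 : Fin n → ℝ) i) := by
      ext x; simp
    rw [hset]
    congr 1
    ext x
    rw [mFourier_coe, smul_eq_mul]
    congr 1
    exact hF x
  have hsum : Summable (mFourierCoeff F) := by
    obtain ⟨C, hC0, hC⟩ := coef_decay (n + 1) hf hper
    refine Summable.of_norm_bounded_eventually ((summable_norm_inv_pow n).mul_left C) ?_
    filter_upwards [(Set.finite_singleton (0 : Fin n → ℤ)).compl_mem_cofinite] with k hk
    rw [hcoef]
    exact hC k hk
  have := hasSum_mFourier_series_apply_of_summable hsum (π x)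
  simp only [hcoef, hF, smul_eq_mul] at this
  convert this using 2 with k
  rw [← mFourier_coe]

/-- Since `torusChar k` is `t ↦ e^{2πit}` after the linear form `k·x`, whose operator norm for the
sup norm is at most `n ‖k‖`, each derivative costs a factor `2π n ‖k‖`. -/
lemma norm_iteratedFDeriv_torusChar_le {n : ℕ} (k : Fin n → ℤ) (m : ℕ) (x : Fin n → ℝ) :
    ‖iteratedFDeriv ℝ m (torusChar k) x‖ ≤ (2 * Real.pi * n * ‖k‖) ^ m := by
  let φ : ℝ → ℂ := fun t => Complex.exp (2 * Real.pi * Complex.I * (t : ℂ))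
  let L : (Fin n → ℝ) →L[ℝ] ℝ := ∑ j, (k j : ℝ) • ContinuousLinearMap.proj j
  have hφ : ContDiff ℝ (⊤ : ℕ∞) φ :=
    ContDiff.cexp (contDiff_const.mul Complex.ofRealCLM.contDiff)
  have hcomp : torusChar k = φ ∘ L := by
    ext y
    simp [torusChar, φ, L]
  have hderiv : ∀ m : ℕ, iteratedDeriv m φ = fun t => (2 * Real.pi * Complex.I) ^ m * φ t := by
    intro m
    induction m with
    | zero => ext t; simp
    | succ m ih =>
      rw [iteratedDeriv_succ, ih]
      ext t
      have h1 : HasDerivAt φ (Complex.exp (2 * Real.pi * Complex.I * (t : ℂ)) *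
          (2 * Real.pi * Complex.I * 1)) t :=
        ((Complex.ofRealCLM.hasDerivAt (x := t)).const_mul (2 * Real.pi * Complex.I)).cexp
      rw [(h1.const_mul _).deriv]
      simp only [φ]
      ring
  have hnφ : ∀ t, ‖iteratedFDeriv ℝ m φ t‖ = (2 * Real.pi) ^ m := by
    intro t
    rw [norm_iteratedFDeriv_eq_norm_iteratedDeriv, hderiv]
    have : ‖φ t‖ = 1 := by
      simp only [φ]
      rw [show 2 * (Real.pi : ℂ) * Complex.I * t = ((2 * Real.pi * t : ℝ) : ℂ) * Complex.I by
        push_cast; ring]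
      exact Complex.norm_exp_ofReal_mul_I _
    rw [norm_mul, this, mul_one, norm_pow]
    simp [abs_of_pos Real.pi_pos]
  have hL : ‖L‖ ≤ n * ‖k‖ := by
    refine ContinuousLinearMap.opNorm_le_bound _ (by positivity) fun y => ?_
    have : L y = ∑ j, (k j : ℝ) * y j := by simp [L]
    rw [this]
    refine (norm_sum_le _ _).trans ?_
    calc ∑ j, ‖(k j : ℝ) * y j‖ ≤ ∑ _j : Fin n, ‖k‖ * ‖y‖ := by
          refine Finset.sum_le_sum fun j _ => ?_
          rw [norm_mul]
          gcongr
          · rw [Real.norm_eq_abs, ← Int.norm_eq_abs]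
            exact norm_le_pi_norm k j
          · exact norm_le_pi_norm y j
      _ = n * ‖k‖ * ‖y‖ := by simp; ring
  rw [hcomp, L.iteratedFDeriv_comp_right hφ x (by exact_mod_cast le_top)]
  refine (ContinuousMultilinearMap.norm_compContinuousLinearMap_le _ _).trans ?_
  rw [hnφ, Finset.prod_const, Finset.card_univ, Fintype.card_fin, ← mul_pow, mul_assoc (2 * Real.pi)]
  gcongr

/-! ### Small divisors and the cohomological equation -/

/-- `|e^{2πiθ} - 1| = 2 |sin πθ|` is at least four times the distance from `θ` to `ℤ`. -/
lemma four_mul_abs_sub_round_le (θ : ℝ) :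
    4 * |θ - round θ| ≤ ‖Complex.exp (2 * Real.pi * Complex.I * (θ : ℂ)) - 1‖ := by
  set r : ℝ := θ - round θ with hr
  have hexp : Complex.exp (2 * Real.pi * Complex.I * (θ : ℂ)) =
      Complex.exp (Complex.I * ((2 * Real.pi * r : ℝ) : ℂ)) := by
    rw [Complex.exp_eq_exp_iff_exists_int]
    refine ⟨round θ, ?_⟩
    rw [hr]
    push_cast
    ring
  have hr2 : |r| ≤ 1 / 2 := abs_sub_round θ
  rw [hexp, Complex.norm_exp_I_mul_ofReal_sub_one, norm_mul, Real.norm_eq_abs, Real.norm_eq_abs]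
  have hπ := Real.pi_pos
  have h1 : |Real.pi * r| = Real.pi * |r| := by rw [abs_mul, abs_of_pos hπ]
  have h2 := Real.mul_abs_le_abs_sin (x := Real.pi * r) (by rw [h1]; nlinarith)
  rw [h1] at h2
  have h3 : 2 / Real.pi * (Real.pi * |r|) = 2 * |r| := by field_simp
  rw [h3] at h2
  rw [show 2 * Real.pi * r / 2 = Real.pi * r by ring, abs_of_pos (two_pos : (0 : ℝ) < 2)]
  linarith

/-- Lower bound for the divisors, with the exponent `τ` rounded up to a natural number and the
ℓ¹-norm replaced by `n` times the sup norm. -/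
lemma small_divisor {n : ℕ} {ν τ : ℝ} (hν : 0 < ν) {Ω : Fin n → ℝ}
    (hdio : ∀ k : Fin n → ℤ, k ≠ 0 → ∀ p : ℤ,
      ν * (∑ i, |(k i : ℝ)|) ^ (-τ) ≤ |(∑ i, (k i : ℝ) * Ω i) - (p : ℝ)|)
    {k : Fin n → ℤ} (hk : k ≠ 0) :
    4 * ν * ((n * ‖k‖) ^ ⌈τ⌉₊)⁻¹ ≤ ‖torusChar k Ω - 1‖ := by
  refine le_trans ?_ (four_mul_abs_sub_round_le (∑ i, (k i : ℝ) * Ω i))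
  have h1 := hdio k hk (round (∑ i, (k i : ℝ) * Ω i))
  set S := ∑ i, |(k i : ℝ)| with hS
  have hS1 : 1 ≤ S := by
    obtain ⟨j, hj⟩ := Function.ne_iff.mp hk
    have : (1 : ℝ) ≤ |(k j : ℝ)| := by exact_mod_cast Int.one_le_abs hj
    exact this.trans (Finset.single_le_sum (f := fun i => |(k i : ℝ)|)
      (fun i _ => abs_nonneg _) (Finset.mem_univ j))
  have hS2 : S ≤ n * ‖k‖ := by
    calc S ≤ ∑ _i : Fin n, ‖k‖ := Finset.sum_le_sum fun i _ => by
          rw [← Int.norm_eq_abs]; exact norm_le_pi_norm k i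
      _ = n * ‖k‖ := by simp
  have h2 : ((n * ‖k‖) ^ ⌈τ⌉₊)⁻¹ ≤ S ^ (-τ) := by
    rw [Real.rpow_neg (by linarith)]
    have hSτ : 0 < S ^ τ := Real.rpow_pos_of_pos (by linarith) _
    refine inv_anti₀ hSτ ?_
    calc S ^ τ ≤ S ^ (⌈τ⌉₊ : ℝ) := Real.rpow_le_rpow_of_exponent_le hS1 (Nat.le_ceil τ)
      _ = S ^ ⌈τ⌉₊ := Real.rpow_natCast _ _
      _ ≤ _ := by gcongr
  nlinarith

/-- Over a Diophantine rotation, every smooth periodic function differs from its mean by a smooth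
coboundary. -/
theorem exists_cohomological_solution {n : ℕ} {ν τ : ℝ} (hν : 0 < ν) {Ω : Fin n → ℝ}
    (hdio : ∀ k : Fin n → ℤ, k ≠ 0 → ∀ p : ℤ,
      ν * (∑ i, |(k i : ℝ)|) ^ (-τ) ≤ |(∑ i, (k i : ℝ) * Ω i) - (p : ℝ)|)
    {f : (Fin n → ℝ) → ℂ} (hf : ContDiff ℝ (⊤ : ℕ∞) f) (hper : IsPeriodic f) :
    ∃ U : (Fin n → ℝ) → ℂ, ContDiff ℝ (⊤ : ℕ∞) U ∧ IsPeriodic U ∧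
      ∀ x, U (x + Ω) - U x = f x - ∫ y in Set.Icc (0 : Fin n → ℝ) 1, f y := by
  -- At `k = 0` the divisor vanishes and `x / 0 = 0` gives the desired value `u 0 = 0`.
  let u : (Fin n → ℤ) → ℂ := fun k => coef f k / (torusChar k Ω - 1)
  have hzero : ∀ x : Fin n → ℝ, torusChar 0 x = 1 := fun x => by simp [torusChar]
  have hu0 : u 0 = 0 := by simp [u, hzero]
  have hdiv : ∀ k, k ≠ 0 → 0 < ‖torusChar k Ω - 1‖ := by
    intro k hk
    refine lt_of_lt_of_le ?_ (small_divisor hν hdio hk)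
    obtain ⟨j, _⟩ := Function.ne_iff.mp hk
    have hn : 0 < (n : ℝ) := by exact_mod_cast j.pos
    have := norm_pos_iff.2 hk
    positivity
  have hbound : ∀ m : ℕ, ∃ C, ∀ k x,
      ‖iteratedFDeriv ℝ m (fun x => u k * torusChar k x) x‖ ≤ C * (‖k‖⁻¹) ^ (n + 1) := by
    intro m
    -- The divisor costs `⌈τ⌉₊` powers of `‖k‖`, the derivatives `m`, and `n + 1` more negative
    -- powers make the bound summable over `ℤⁿ`.
    obtain ⟨C, hC0, hC⟩ := coef_decay (⌈τ⌉₊ + m + (n + 1)) hf hper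
    refine ⟨C * n ^ ⌈τ⌉₊ / (4 * ν) * (2 * Real.pi * n) ^ m, fun k x => ?_⟩
    have hsm : iteratedFDeriv ℝ m (fun x => u k * torusChar k x) x =
        u k • iteratedFDeriv ℝ m (torusChar k) x :=
      iteratedFDeriv_const_smul_apply' (a := u k) (f := torusChar k) ((torusChar_contDiff k).of_le
        (by exact_mod_cast le_top)).contDiffAt
    rw [hsm, norm_smul]
    by_cases hk : k = 0
    · subst hk
      rw [hu0, norm_zero, zero_mul]
      positivity
    have hkpos := norm_pos_iff.2 hk
    have hnpos : 0 < (n : ℝ) := by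
      obtain ⟨j, _⟩ := Function.ne_iff.mp hk
      exact_mod_cast j.pos
    calc ‖u k‖ * ‖iteratedFDeriv ℝ m (torusChar k) x‖
        ≤ (C * (‖k‖⁻¹) ^ (⌈τ⌉₊ + m + (n + 1)) / (4 * ν * ((n * ‖k‖) ^ ⌈τ⌉₊)⁻¹)) *
            (2 * Real.pi * n * ‖k‖) ^ m := by
          refine mul_le_mul ?_ (norm_iteratedFDeriv_torusChar_le k m x) (norm_nonneg _)
            (by positivity)
          rw [norm_div]
          exact div_le_div₀ (by positivity) (hC k hk) (by positivity) (small_divisor hν hdio hk)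
      _ = C * n ^ ⌈τ⌉₊ / (4 * ν) * (2 * Real.pi * n) ^ m * (‖k‖⁻¹) ^ (n + 1) := by
          rw [pow_add, pow_add, mul_pow (n : ℝ), mul_pow (2 * Real.pi * n), inv_pow, inv_pow]
          field_simp
  choose C hC using hbound
  have hsum : ∀ m, Summable fun k : Fin n → ℤ => C m * (‖k‖⁻¹) ^ (n + 1) := fun m =>
    (summable_norm_inv_pow n).mul_left _
  have hsummable : ∀ x, Summable fun k => u k * torusChar k x := fun x =>
    Summable.of_norm_bounded (hsum 0) fun k => by
      simpa using hC 0 k x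
  refine ⟨fun x => ∑' k, u k * torusChar k x, ?_, ?_, ?_⟩
  · exact contDiff_tsum (fun k => contDiff_const.mul (torusChar_contDiff k))
      (fun m _ => hsum m) (fun m k x _ => hC m k x)
  · intro x l
    simp only [torusChar_periodic _ x l]
  · intro x
    have hmean : (∫ y in Set.Icc (0 : Fin n → ℝ) 1, f y) = coef f 0 * torusChar 0 x := by
      simp [coef, hzero]
    have h1 := (hsummable (x + Ω)).hasSum.sub (hsummable x).hasSum
    have h2 := (hasSum_coef hf hper x).sub (hasSum_ite_eq (0 : Fin n → ℤ) (coef f 0 * torusChar 0 x))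
    rw [hmean]
    refine h1.unique ?_
    convert h2 using 2 with k
    by_cases hk : k = 0
    · subst hk
      simp [hu0]
    · have := norm_pos_iff.1 (hdiv k hk)
      simp only [hk, if_false, sub_zero, torusChar_add, u]
      field_simp
end
end SkewProduct


/-- reduction of a linear skew product over a torus diffeomorphism
conjugate to a Diophantine rotation to constant coefficients.  Working with lifts:
`v, h` are smooth lifts of torus diffeomorphisms (commuting with integer translations),
`a` is smooth, periodic and nonvanishing, and `h⁻¹ ∘ v ∘ h = (·+Ω)` with `Ω`
Diophantine.  Then there are a smooth periodic nonvanishing `b` and a constant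
`κ ≠ 0`, with `|κ| = exp(∫_{𝕋^{d−1}} log|a∘h|)`, such that `a(h(σ))·b(σ) = κ·b(σ+Ω)`;
equivalently `H(σ,t) = (h(σ), b(σ)t)` conjugates `ψ(σ,t) = (v(σ), a(σ)t)` to
`(σ,t) ↦ (σ+Ω, κt)`. -/
theorem skew_product_reduction_to_constant_coefficients
    (d : ℕ) (hd : 2 ≤ d) (ν τ : ℝ) (hν : 0 < ν) (hτ : 0 < τ)
    (Ω : Fin (d - 1) → ℝ)
    (hdio : ∀ k : Fin (d - 1) → ℤ, k ≠ 0 → ∀ n : ℤ,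
      ν * (∑ i, |(k i : ℝ)|) ^ (-τ) ≤ |(∑ i, (k i : ℝ) * Ω i) - (n : ℝ)|)
    (v : (Fin (d - 1) → ℝ) → (Fin (d - 1) → ℝ)) (hv : ContDiff ℝ (⊤ : ℕ∞) v)
    (hvlift : ∀ (σ : Fin (d - 1) → ℝ) (k : Fin (d - 1) → ℤ),
      v (σ + fun i => (k i : ℝ)) = v σ + fun i => (k i : ℝ))
    (a : (Fin (d - 1) → ℝ) → ℝ) (ha : ContDiff ℝ (⊤ : ℕ∞) a)
    (haper : ∀ (σ : Fin (d - 1) → ℝ) (k : Fin (d - 1) → ℤ),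
      a (σ + fun i => (k i : ℝ)) = a σ)
    (hanz : ∀ σ, a σ ≠ 0)
    (h hinv : (Fin (d - 1) → ℝ) → (Fin (d - 1) → ℝ))
    (hh : ContDiff ℝ (⊤ : ℕ∞) h) (hhinv : ContDiff ℝ (⊤ : ℕ∞) hinv)
    (hhlift : ∀ (σ : Fin (d - 1) → ℝ) (k : Fin (d - 1) → ℤ),
      h (σ + fun i => (k i : ℝ)) = h σ + fun i => (k i : ℝ))
    (hleft : ∀ σ, hinv (h σ) = σ) (hright : ∀ σ, h (hinv σ) = σ)
    (hconj : ∀ σ, hinv (v (h σ)) = σ + Ω) :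
    ∃ (b : (Fin (d - 1) → ℝ) → ℝ) (κ : ℝ),
      ContDiff ℝ (⊤ : ℕ∞) b ∧
      (∀ (σ : Fin (d - 1) → ℝ) (k : Fin (d - 1) → ℤ),
        b (σ + fun i => (k i : ℝ)) = b σ) ∧
      (∀ σ, b σ ≠ 0) ∧ κ ≠ 0 ∧
      |κ| = Real.exp (∫ σ in Set.Icc (0 : Fin (d - 1) → ℝ) 1, Real.log |a (h σ)|) ∧
      (∀ σ, a (h σ) * b σ = κ * b (σ + Ω)) ∧
      (∀ (σ : Fin (d - 1) → ℝ) (t : ℝ),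
        (v (h σ), a (h σ) * (b σ * t)) = (h (σ + Ω), b (σ + Ω) * (κ * t))) := by
  let f : (Fin (d - 1) → ℝ) → ℝ := fun σ => Real.log |a (h σ)|
  have hah : ContDiff ℝ (⊤ : ℕ∞) fun σ => a (h σ) := ha.comp hh
  have hf : ContDiff ℝ (⊤ : ℕ∞) f := by
    simp only [f, Real.log_abs]
    exact hah.log fun σ => hanz _
  have hfper : SkewProduct.IsPeriodic f := fun σ k => by simp only [f, hhlift, haper]
  obtain ⟨U, hU, hUper, hUeq⟩ := SkewProduct.exists_cohomological_solution hν hdio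
    (f := fun σ => (f σ : ℂ)) (Complex.ofRealCLM.contDiff.comp hf)
    (fun σ k => by simp only [hfper σ k])
  set c : ℝ := ∫ σ in Set.Icc (0 : Fin (d - 1) → ℝ) 1, f σ with hc
  have hre : ∀ σ, (U (σ + Ω)).re = (U σ).re + (f σ - c) := by
    intro σ
    have h1 := congrArg Complex.re (hUeq σ)
    rw [integral_complex_ofReal, ← hc] at h1
    simp only [Complex.sub_re, Complex.ofReal_re] at h1
    linarith
  -- `s` is the sign of `a`, constant because `ℝ^{d-1}` is connected.
  obtain ⟨s, hs, hsa⟩ : ∃ s : ℝ, |s| = 1 ∧ ∀ σ, a σ = s * |a σ| := by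
    have hconn : IsPreconnected (Set.univ : Set (Fin (d - 1) → ℝ)) := isPreconnected_univ
    by_cases h0 : 0 < a 0
    · refine ⟨1, by simp, fun σ => ?_⟩
      have : 0 < a σ := by
        by_contra hneg
        obtain ⟨x, -, hx⟩ := hconn.intermediate_value (Set.mem_univ σ) (Set.mem_univ 0)
          ha.continuous.continuousOn ⟨not_lt.1 hneg, h0.le⟩
        exact hanz x hx
      rw [abs_of_pos this, one_mul]
    · refine ⟨-1, by simp, fun σ => ?_⟩
      have : a σ ≤ 0 := by
        by_contra hpos
        obtain ⟨x, -, hx⟩ := hconn.intermediate_value (Set.mem_univ 0) (Set.mem_univ σ)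
          ha.continuous.continuousOn ⟨not_lt.1 h0, (not_le.1 hpos).le⟩
        exact hanz x hx
      rw [abs_of_nonpos this]
      ring
  have hs0 : s ≠ 0 := by
    rintro rfl
    simp at hs
  have hmain : ∀ σ, a (h σ) * Real.exp (U σ).re =
      s * Real.exp c * Real.exp (U (σ + Ω)).re := by
    intro σ
    have hlog : |a (h σ)| = Real.exp (f σ) := (Real.exp_log (abs_pos.2 (hanz _))).symm
    rw [hsa (h σ), hlog, mul_assoc, mul_assoc, ← Real.exp_add, ← Real.exp_add, hre]
    ring_nf
  refine ⟨fun σ => Real.exp (U σ).re, s * Real.exp c, ?_, ?_, fun σ => (Real.exp_pos _).ne',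
    mul_ne_zero hs0 (Real.exp_pos _).ne', ?_, hmain, ?_⟩
  · exact (Complex.reCLM.contDiff.comp hU).exp
  · intro σ k
    simp only [hUper σ k]
  · rw [abs_mul, hs, one_mul, abs_of_pos (Real.exp_pos _)]
  · intro σ t
    have hvh : v (h σ) = h (σ + Ω) := by rw [← hconj, hright]
    rw [Prod.mk.injEq]
    refine ⟨hvh, ?_⟩
    linear_combination t * hmain σ
end
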